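/- arXiv:math/9411210 — 3 statements merged into one kernel-verified Lean document; each statement's English description precedes it below -/
import Mathlib

section
/- Let m ≥ 2 and let N be a symmetric lattice norm on ℝ^m (functions Fin m → ℝ) that is not proportional to the Euclidean norm, i.e. there is no constant c > 0 with N(x) = c·(∑ x_i²)^{1/2} for all x. Let H be a separable real Hilbert space with dim H ≥ 2, and equip X = (Fin m → H) with the norm ‖f‖ = N(fun i => ‖f i‖_H). Then for every surjective linear isometry T : X → X there exist a permutation σ of Fin m, a map a : Fin m → ℝ with |a i| = 1 for every i, and a family S : Fin m → (H → H) of surjective linear isometries of H, such that for every f ∈ X and every i, (T f) i = a i • S i (f (σ i)). -/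
open scoped RealInnerProductSpace

/-- `N` is a norm on `Fin m → ℝ`. -/
def IsNorm {m : ℕ} (N : (Fin m → ℝ) → ℝ) : Prop :=
  (∀ x, N x = 0 ↔ x = 0) ∧
  (∀ (c : ℝ) (x : Fin m → ℝ), N (c • x) = |c| * N x) ∧
  (∀ x y, N (x + y) ≤ N x + N y)

/-- `N` is a lattice norm: it depends only on coordinatewise absolute values, monotonically. -/
def IsLatticeNorm {m : ℕ} (N : (Fin m → ℝ) → ℝ) : Prop :=
  IsNorm N ∧ (∀ x, N x = N fun i => |x i|) ∧
  ∀ x y : Fin m → ℝ, (∀ i, |x i| ≤ |y i|) → N x ≤ N y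

/-- `N` is a symmetric lattice norm: a lattice norm invariant under permutations. -/
def IsSymmLatticeNorm {m : ℕ} (N : (Fin m → ℝ) → ℝ) : Prop :=
  IsLatticeNorm N ∧ ∀ (π : Equiv.Perm (Fin m)) (x : Fin m → ℝ), N (x ∘ π) = N x

/-!
Rotating `f i` in a plane of `H` generates a one-parameter group of isometries of `X(H)`, and its
conjugate by `T` is another one, with generator `A`. Such an `A` is skew-Hermitian: supporting
functionals at `f` vanish on `A f`. Testing this on `f = (x i • h i)` for all signs of the unit
vectors `h i` isolates one pair of off-diagonal blocks of `A`. A nonzero block would force every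
supporting functional of `N` to be parallel to its point, and then `N` would be constant on
Euclidean great circles. So `A` is block diagonal for non-Euclidean `N`. On its two-dimensional
range `A` is a complex structure, and for block diagonal `A` this range has to lie in a single
coordinate. Hence `T` maps each coordinate copy of `H` into one coordinate.
-/

section Analysis

theorem eq_of_mul_cos_sub_le {ψ : ℝ → ℝ} (h : ∀ s t, ψ t * Real.cos (s - t) ≤ ψ s) (s t : ℝ) :
    ψ s = ψ t := by
  have nonneg (t : ℝ) : 0 ≤ ψ t := by simpa using h t (t - Real.pi / 2)
  have deriv_zero (t : ℝ) : HasFDerivAt ψ (0 : ℝ →L[ℝ] ℝ) t := by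
    have half_lt_cos : ∀ᶠ s in nhds t, 1 / 2 < Real.cos (s - t) :=
      (by fun_prop : Continuous fun s => Real.cos (s - t)).continuousAt.eventually_const_lt
        (by norm_num)
    have quadratic : (fun s => ψ s - ψ t) =O[nhds t] fun s => ‖s - t‖ ^ 2 := by
      refine Asymptotics.IsBigO.of_bound (ψ t) (half_lt_cos.mono fun s hs => ?_)
      have lower := h s t
      have upper : ψ s * Real.cos (s - t) ≤ ψ t := by simpa [← Real.cos_neg (s - t)] using h t s
      have hcos := Real.one_sub_sq_div_two_le_cos (x := s - t)
      have hs_le : ψ s ≤ 2 * ψ t := by nlinarith [nonneg s]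
      rw [norm_pow, norm_norm, Real.norm_eq_abs, Real.norm_eq_abs, sq_abs, abs_le]
      constructor <;> nlinarith [nonneg s, nonneg t, sq_nonneg (s - t)]
    simpa using (quadratic.hasFDerivAt one_lt_two).add_const (ψ t)
  exact is_const_of_fderiv_eq_zero (𝕜 := ℝ) (fun t => (deriv_zero t).differentiableAt)
    (fun t => (deriv_zero t).fderiv) s t

theorem eq_zero_of_sin_mul_add_one_sub_cos_mul_nonpos {b c : ℝ}
    (h : ∀ t : ℝ, Real.sin t * b + (1 - Real.cos t) * c ≤ 0) : b = 0 := by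
  have hderiv : HasDerivAt (fun t : ℝ => Real.sin t * b + (1 - Real.cos t) * c)
      (Real.cos 0 * b + -(-Real.sin 0) * c) 0 :=
    ((Real.hasDerivAt_sin 0).mul_const b).add (((Real.hasDerivAt_cos 0).const_sub 1).mul_const c)
  have hmax : IsLocalMax (fun t : ℝ => Real.sin t * b + (1 - Real.cos t) * c) 0 :=
    Filter.Eventually.of_forall fun t => by simpa using h t
  simpa using hmax.hasDerivAt_eq_zero hderiv

theorem exists_norm_eq_one_and_eq_norm_smul {E : Type*} [NormedAddCommGroup E] [NormedSpace ℝ E]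
    [Nontrivial E] (x : E) : ∃ e : E, ‖e‖ = 1 ∧ x = ‖x‖ • e := by
  rcases eq_or_ne x 0 with rfl | hx
  · obtain ⟨e, he⟩ := exists_norm_eq E zero_le_one
    exact ⟨e, he, by simp⟩
  · exact ⟨‖x‖⁻¹ • x, norm_smul_inv_norm hx, (smul_inv_smul₀ (norm_ne_zero_iff.2 hx) x).symm⟩

theorem exists_dual_eq_and_le_seminorm {E : Type*} [AddCommGroup E] [Module ℝ E]
    (p : Seminorm ℝ E) (x : E) : ∃ g : Module.Dual ℝ E, g x = p x ∧ ∀ z, g z ≤ p z := by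
  rcases eq_or_ne x 0 with rfl | hx
  · exact ⟨0, by simp, fun z => by simp⟩
  let f : E →ₗ.[ℝ] ℝ := LinearPMap.mkSpanSingleton x (p x) hx
  have hf : ∀ z : f.domain, f z ≤ p z := by
    rintro ⟨_, hz⟩
    obtain ⟨c, rfl⟩ := Submodule.mem_span_singleton.1 hz
    calc f ⟨c • x, hz⟩ = c * p x := LinearPMap.mkSpanSingleton'_apply x (p x) _ c hz
      _ ≤ |c| * p x := by gcongr; exact le_abs_self c
      _ = p (c • x) := (map_smul_eq_mul p c x).symm
  obtain ⟨g, hg, hgp⟩ := exists_extension_of_le_sublinear f p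
    (fun c hc z => by rw [map_smul_eq_mul, Real.norm_of_nonneg hc.le]) (map_add_le_add p) hf
  refine ⟨g, ?_, hgp⟩
  exact (hg ⟨x, Submodule.mem_span_singleton_self x⟩).trans
    (LinearPMap.mkSpanSingleton_apply ℝ _ hx (p x))

end Analysis

section InnerProductSpace

variable {E : Type*} [NormedAddCommGroup E] [InnerProductSpace ℝ E] {u v : E}

theorem exists_orthogonal_unit_decomposition (hE : 2 ≤ Module.rank ℝ E) (hu : ‖u‖ = 1) (w : E) :
    ∃ v : E, ‖v‖ = 1 ∧ ⟪u, v⟫ = 0 ∧ ∃ b : ℝ, w = ⟪u, w⟫ • u + b • v := by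
  have hK : Nontrivial (ℝ ∙ u)ᗮ := by
    rw [Submodule.nontrivial_iff_ne_bot, Ne, Submodule.orthogonal_eq_bot_iff]
    intro htop
    have hrank : Module.rank ℝ E ≤ 1 := rank_le_one_iff.2 ⟨u, fun w =>
      Submodule.mem_span_singleton.1 (htop ▸ Submodule.mem_top)⟩
    exact absurd (hE.trans hrank) (by norm_num)
  have hw : w - ⟪u, w⟫ • u ∈ (ℝ ∙ u)ᗮ := by
    simp [Submodule.mem_orthogonal_singleton_iff_inner_right, inner_sub_right,
      real_inner_smul_right, hu]
  obtain ⟨e, he, hwe⟩ := exists_norm_eq_one_and_eq_norm_smul (⟨_, hw⟩ : (ℝ ∙ u)ᗮ)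
  refine ⟨e, he, Submodule.mem_orthogonal_singleton_iff_inner_right.1 e.2, _,
    sub_eq_iff_eq_add'.1 (congrArg Subtype.val hwe)⟩

theorem exists_eq_norm_smul_cos_add_sin (hE : 2 ≤ Module.rank ℝ E) (hu : ‖u‖ = 1) (w : E) :
    ∃ v : E, ‖v‖ = 1 ∧ ⟪u, v⟫ = 0 ∧
      ∃ t : ℝ, w = ‖w‖ • (Real.cos t • u + Real.sin t • v) := by
  obtain ⟨v, hv, huv, b, hw⟩ := exists_orthogonal_unit_decomposition hE hu w
  let z : ℂ := ⟨⟪u, w⟫, b⟩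
  have hz : ‖w‖ = ‖z‖ := by
    refine (mul_self_inj (norm_nonneg w) (norm_nonneg z)).1 ?_
    calc ‖w‖ * ‖w‖ = ‖⟪u, w⟫ • u + b • v‖ * ‖⟪u, w⟫ • u + b • v‖ := by rw [← hw]
      _ = ‖⟪u, w⟫ • u‖ * ‖⟪u, w⟫ • u‖ + ‖b • v‖ * ‖b • v‖ :=
        norm_add_sq_eq_norm_sq_add_norm_sq_real
          (by rw [real_inner_smul_left, real_inner_smul_right, huv, mul_zero, mul_zero])
      _ = ‖z‖ * ‖z‖ := by
        simp [norm_smul, hu, hv, z, Complex.norm_mul_self_eq_normSq, Complex.normSq_apply]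
  refine ⟨v, hv, huv, z.arg, ?_⟩
  rw [hz, smul_add, smul_smul, smul_smul, Complex.norm_mul_cos_arg, Complex.norm_mul_sin_arg]
  exact hw

theorem inner_cos_add_sin (hu : ‖u‖ = 1) (hv : ‖v‖ = 1) (huv : ⟪u, v⟫ = 0) (s t : ℝ) :
    ⟪Real.cos t • u + Real.sin t • v, Real.cos s • u + Real.sin s • v⟫ = Real.cos (s - t) := by
  have hvu : ⟪v, u⟫ = 0 := real_inner_comm u v ▸ huv
  simp only [inner_add_left, inner_add_right, real_inner_smul_left, real_inner_smul_right,
    real_inner_self_eq_norm_sq, hu, hv, huv, hvu, Real.cos_sub]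
  ring

/- Along a great circle the hypothesis reads `p(t) cos (s - t) ≤ p(s)`, so `p` varies only to
second order there. -/
theorem exists_eq_mul_norm_of_mul_inner_le (hE : 2 ≤ Module.rank ℝ E) {p : E → ℝ}
    (hsmul : ∀ r : ℝ, 0 ≤ r → ∀ x, p (r • x) = r * p x)
    (hp : ∀ x z, p x * ⟪x, z⟫ ≤ ‖x‖ ^ 2 * p z) :
    ∃ u : E, ‖u‖ = 1 ∧ ∀ w, p w = p u * ‖w‖ := by
  have : Nontrivial E := rank_pos_iff_nontrivial.1 (zero_lt_two.trans_le hE)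
  obtain ⟨u, hu⟩ := exists_norm_eq E zero_le_one
  refine ⟨u, hu, fun w => ?_⟩
  obtain ⟨v, hv, huv, t, hw⟩ := exists_eq_norm_smul_cos_add_sin hE hu w
  have hconst : p (Real.cos t • u + Real.sin t • v) = p u := by
    have hcircle := eq_of_mul_cos_sub_le
      (ψ := fun t => p (Real.cos t • u + Real.sin t • v)) (fun s t => by
        have hst := hp (Real.cos t • u + Real.sin t • v) (Real.cos s • u + Real.sin s • v)
        rwa [← real_inner_self_eq_norm_sq, inner_cos_add_sin hu hv huv,
          inner_cos_add_sin hu hv huv, sub_self, Real.cos_zero, one_mul] at hst) t 0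
    simpa using hcircle
  rw [hw, hsmul _ (norm_nonneg w), hconst, ← hw, mul_comm]

/-- The infinitesimal rotation `w ↦ ⟪u, w⟫ v - ⟪v, w⟫ u` taking `u` towards `v`, i.e. the bivector
`u ∧ v` viewed as a skew-adjoint operator of rank at most two. -/
noncomputable def infinitesimalRotation (u v : E) : E →ₗ[ℝ] E :=
  InnerProductSpace.rankOne ℝ v u - InnerProductSpace.rankOne ℝ u v

theorem infinitesimalRotation_apply (u v w : E) :
    infinitesimalRotation u v w = ⟪u, w⟫ • v - ⟪v, w⟫ • u := by
  simp [infinitesimalRotation]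

theorem infinitesimalRotation_apply_left (hu : ‖u‖ = 1) (huv : ⟪u, v⟫ = 0) :
    infinitesimalRotation u v u = v := by
  simp [infinitesimalRotation_apply, hu, real_inner_comm u v, huv]

theorem infinitesimalRotation_apply_right (hv : ‖v‖ = 1) (huv : ⟪u, v⟫ = 0) :
    infinitesimalRotation u v v = -u := by
  simp [infinitesimalRotation_apply, hv, huv]

theorem inner_infinitesimalRotation_left (u v w z : E) :
    ⟪infinitesimalRotation u v w, z⟫ = -⟪w, infinitesimalRotation u v z⟫ := by
  simp only [infinitesimalRotation_apply, inner_sub_left, inner_sub_right, real_inner_smul_left,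
    real_inner_smul_right, real_inner_comm w]
  ring

theorem infinitesimalRotation_apply_apply_apply (hu : ‖u‖ = 1) (hv : ‖v‖ = 1) (huv : ⟪u, v⟫ = 0)
    (w : E) :
    infinitesimalRotation u v (infinitesimalRotation u v (infinitesimalRotation u v w)) =
      -infinitesimalRotation u v w := by
  rw [infinitesimalRotation_apply u v w]
  simp only [map_sub, map_smul, map_neg, infinitesimalRotation_apply_left hu huv,
    infinitesimalRotation_apply_right hv huv]
  module

/- Rodrigues' formula: `J³ = -J` makes `1 + sin t J + (1 - cos t) J²` the exponential of `t J`. -/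
theorem norm_add_sin_smul_add_one_sub_cos_smul {J : E →ₗ[ℝ] E}
    (hskew : ∀ w z, ⟪J w, z⟫ = -⟪w, J z⟫) (hcube : ∀ w, J (J (J w)) = -J w) (w : E) (t : ℝ) :
    ‖w + (Real.sin t • J w + (1 - Real.cos t) • J (J w))‖ = ‖w‖ := by
  have orth (z : E) : ⟪z, J z⟫ = 0 := by linarith [hskew z z, real_inner_comm z (J z)]
  have hJJ : ⟪J (J w), J (J w)⟫ = ⟪J w, J w⟫ := by rw [hskew, hcube, inner_neg_right, neg_neg]
  have hwJJ : ⟪w, J (J w)⟫ = -⟪J w, J w⟫ := by rw [hskew, neg_neg]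
  rw [← sq_eq_sq₀ (norm_nonneg _) (norm_nonneg _), ← real_inner_self_eq_norm_sq,
    ← real_inner_self_eq_norm_sq]
  simp only [inner_add_left, inner_add_right, real_inner_smul_left, real_inner_smul_right,
    real_inner_comm w, real_inner_comm (J w) (J (J w)), orth, hJJ, hwJJ]
  linear_combination ⟪J w, J w⟫ * Real.sin_sq_add_cos_sq t

end InnerProductSpace

section SymmLatticeNorm

variable {m : ℕ} {N : (Fin m → ℝ) → ℝ}

/-- A norm on `ℝ^m` as a Mathlib `Seminorm`. -/
def IsNorm.toSeminorm (hN : IsNorm N) : Seminorm ℝ (Fin m → ℝ) :=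
  Seminorm.of N hN.2.2 hN.2.1

theorem IsNorm.pos (hN : IsNorm N) {x : Fin m → ℝ} (hx : x ≠ 0) : 0 < N x :=
  (apply_nonneg hN.toSeminorm x).lt_of_ne' (mt (hN.1 x).1 hx)

theorem IsNorm.apply_single (hN : IsNorm N) (i : Fin m) (c : ℝ) :
    N (Pi.single i c) = |c| * N (Pi.single i 1) := by
  rw [← hN.2.1, ← Pi.single_smul, smul_eq_mul, mul_one]

theorem IsLatticeNorm.apply_norm_smul {E : Type*} [SeminormedAddCommGroup E] [NormedSpace ℝ E]
    (hN : IsLatticeNorm N) {h : Fin m → E} (hh : ∀ i, ‖h i‖ = 1) (x : Fin m → ℝ) :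
    N (fun i => ‖x i • h i‖) = N x := by
  simp only [norm_smul, hh, mul_one, Real.norm_eq_abs, ← hN.2.1 x]

theorem IsSymmLatticeNorm.apply_single_eq (hN : IsSymmLatticeNorm N) (i j : Fin m) (c : ℝ) :
    N (Pi.single i c) = N (Pi.single j c) := by
  rw [← hN.2 (Equiv.swap i j), Pi.single_comp_equiv, Equiv.symm_swap, Equiv.swap_apply_left]

/-- `N` is a positive multiple of the Euclidean norm. -/
def IsEuclidean (N : (Fin m → ℝ) → ℝ) : Prop :=
  ∃ c : ℝ, 0 < c ∧ ∀ x : Fin m → ℝ, N x = c * Real.sqrt (∑ i, x i ^ 2)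

/-- `y`, as the functional `z ↦ y ⬝ᵥ z`, supports `N` at `x`: it has dual norm at most one and
attains the value `N x` at `x`. -/
def IsSupportingAt (N : (Fin m → ℝ) → ℝ) (x y : Fin m → ℝ) : Prop :=
  y ⬝ᵥ x = N x ∧ ∀ z, y ⬝ᵥ z ≤ N z

theorem IsNorm.exists_isSupportingAt (hN : IsNorm N) (x : Fin m → ℝ) :
    ∃ y, IsSupportingAt N x y := by
  obtain ⟨g, hgx, hg⟩ := exists_dual_eq_and_le_seminorm hN.toSeminorm x
  obtain ⟨y, rfl⟩ := (dotProductEquiv ℝ (Fin m)).surjective g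
  exact ⟨y, hgx, hg⟩

theorem IsSupportingAt.comp_perm (hN : IsSymmLatticeNorm N) {x y : Fin m → ℝ}
    (h : IsSupportingAt N x y) (π : Equiv.Perm (Fin m)) : IsSupportingAt N (x ∘ π) (y ∘ π) := by
  refine ⟨by rw [comp_equiv_dotProduct_comp_equiv, hN.2, h.1], fun z => ?_⟩
  rw [← dotProduct_comp_equiv_symm, ← hN.2 π.symm z]
  exact h.2 _

theorem isEuclidean_of_mul_dotProduct_le (hm : 2 ≤ m) (hN : IsNorm N)
    (h : ∀ x z, N x * (x ⬝ᵥ z) ≤ (x ⬝ᵥ x) * N z) : IsEuclidean N := by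
  have hrank : 2 ≤ Module.rank ℝ (EuclideanSpace ℝ (Fin m)) := by
    rw [← Module.finrank_eq_rank, finrank_euclideanSpace_fin]
    exact_mod_cast hm
  obtain ⟨u, hu, hNu⟩ := exists_eq_mul_norm_of_mul_inner_le hrank
    (p := fun x => N (WithLp.ofLp x))
    (fun r hr x => by rw [WithLp.ofLp_smul, hN.2.1, abs_of_nonneg hr]) (fun x z => by
      rw [← real_inner_self_eq_norm_sq, EuclideanSpace.inner_eq_star_dotProduct,
        EuclideanSpace.inner_eq_star_dotProduct, star_trivial, dotProduct_comm]
      exact h x.ofLp z.ofLp)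
  refine ⟨N (WithLp.ofLp u), hN.pos fun hu0 => ?_, fun x => ?_⟩
  · rw [(WithLp.ofLp_eq_zero 2).1 hu0, norm_zero] at hu
    exact zero_ne_one hu
  · simpa [EuclideanSpace.norm_eq] using hNu (WithLp.toLp 2 x)

theorem isEuclidean_of_isSupportingAt_parallel (hm : 2 ≤ m) (hN : IsNorm N)
    (h : ∀ x y, IsSupportingAt N x y → ∀ k l, y k * x l = y l * x k) : IsEuclidean N := by
  refine isEuclidean_of_mul_dotProduct_le hm hN fun x z => ?_
  obtain ⟨y, hy⟩ := hN.exists_isSupportingAt x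
  have hparallel : N x • x = (x ⬝ᵥ x) • y := by
    ext k
    simp only [← hy.1, Pi.smul_apply, smul_eq_mul, dotProduct, Finset.sum_mul]
    exact Finset.sum_congr rfl fun l _ => by linear_combination x l * h x y hy l k
  calc N x * (x ⬝ᵥ z) = (x ⬝ᵥ x) * (y ⬝ᵥ z) := by
        rw [← smul_eq_mul, ← smul_dotProduct, hparallel, smul_dotProduct, smul_eq_mul]
    _ ≤ (x ⬝ᵥ x) * N z := by
        gcongr
        exacts [dotProduct_self_star_nonneg x, hy.2 z]

theorem IsSymmLatticeNorm.isEuclidean_of_isSupportingAt_mul_comm (hN : IsSymmLatticeNorm N)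
    {i j : Fin m} (hij : i ≠ j) (h : ∀ x y, IsSupportingAt N x y → y i * x j = y j * x i) :
    IsEuclidean N := by
  have hm : 2 ≤ m := by
    have : Nontrivial (Fin m) := ⟨i, j, hij⟩
    exact Fin.nontrivial_iff_two_le.1 this
  refine isEuclidean_of_isSupportingAt_parallel hm hN.1.1 fun x y hxy k l => ?_
  rcases eq_or_ne k l with rfl | hkl
  · rfl
  obtain ⟨π, rfl, rfl⟩ := MulAction.is_two_pretransitive_iff.1
    (Equiv.Perm.isMultiplyPretransitive (Fin m) 2) hij hkl
  exact h _ _ (hxy.comp_perm hN π)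

theorem IsSymmLatticeNorm.add_eq_zero_of_isSupportingAt (hN : IsSymmLatticeNorm N)
    {i j : Fin m} (hij : i ≠ j) {b c : ℝ}
    (h : ∀ x y, IsSupportingAt N x y → y i * x j * b + y j * x i * c = 0) : b + c = 0 := by
  let x : Fin m → ℝ := Pi.single i 1 + Pi.single j 1
  have hxi : x i = 1 := by simp [x, hij]
  have hxj : x j = 1 := by simp [x, hij.symm]
  have hx : x ≠ 0 := fun hx => by simp [hx] at hxi
  obtain ⟨y, hxy⟩ := hN.1.1.exists_isSupportingAt x
  have hy : y i + y j ≠ 0 := by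
    have : y i + y j = N x := by rw [← hxy.1]; simp [x, dotProduct_add]
    exact this ▸ (hN.1.1.pos hx).ne'
  have heq := h x y hxy
  have heq_swap := h _ _ (hxy.comp_perm hN (Equiv.swap i j))
  simp only [Function.comp_apply, Equiv.swap_apply_left, Equiv.swap_apply_right, hxi, hxj]
    at heq heq_swap
  refine (mul_eq_zero.1 ?_).resolve_left hy
  linear_combination heq + heq_swap

theorem IsSymmLatticeNorm.eq_zero_of_isSupportingAt (hN : IsSymmLatticeNorm N)
    (hE : ¬ IsEuclidean N) {i j : Fin m} (hij : i ≠ j) {b c : ℝ}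
    (h : ∀ x y, IsSupportingAt N x y → y i * x j * b + y j * x i * c = 0) : b = 0 := by
  by_contra hb
  have hbc := hN.add_eq_zero_of_isSupportingAt hij h
  refine hE (hN.isEuclidean_of_isSupportingAt_mul_comm hij fun x y hxy => ?_)
  refine mul_right_cancel₀ hb ?_
  linear_combination h x y hxy - y j * x i * hbc

end SymmLatticeNorm

section LinearAlgebra

theorem add_eq_zero_of_forall_abs_eq_one_dotProduct_mulVec_eq_zero {ι : Type*} [Fintype ι]
    {B : Matrix ι ι ℝ} (hB : ∀ ε : ι → ℝ, (∀ i, |ε i| = 1) → ε ⬝ᵥ B.mulVec ε = 0) {i j : ι}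
    (hij : i ≠ j) : B i j + B j i = 0 := by
  classical
  let negate (k : ι) (ε : ι → ℝ) : ι → ℝ := ε - (2 * ε k) • Pi.single k 1
  have abs_negate (k : ι) {ε : ι → ℝ} (hε : ∀ l, |ε l| = 1) (l : ι) : |negate k ε l| = 1 := by
    rcases eq_or_ne l k with rfl | hlk
    · simp [negate, two_mul, hε]
    · simp [negate, hlk, hε]
  have abs_one_apply (l : ι) : |(1 : ι → ℝ) l| = 1 := abs_one
  have h₀ := hB _ abs_one_apply
  have hi := hB _ (abs_negate i abs_one_apply)
  have hj := hB _ (abs_negate j abs_one_apply)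
  have hji := hB _ (abs_negate j (abs_negate i abs_one_apply))
  simp only [negate, Pi.sub_apply, Pi.smul_apply, Pi.one_apply, Pi.single_eq_of_ne hij.symm,
    Matrix.mulVec_sub, Matrix.mulVec_smul, sub_dotProduct, dotProduct_sub, smul_dotProduct,
    dotProduct_smul, smul_eq_mul, mul_zero, mul_one, sub_zero, single_one_dotProduct,
    Matrix.mulVec_single_one, Matrix.col_apply] at h₀ hi hj hji
  linarith

variable {ι : Type*} [DecidableEq ι] {R V : Type*}

theorem map_apply_eq_sum_single [Fintype ι] [Semiring R] [AddCommMonoid V] [Module R V]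
    (A : (ι → V) →ₗ[R] (ι → V)) (f : ι → V) (i : ι) :
    A f i = ∑ j, A (Pi.single j (f j)) i := by
  conv_lhs => rw [← Finset.univ_sum_single f, map_sum, Finset.sum_apply]

theorem map_apply_eq_of_apply_single_eq_zero [Finite ι] [Semiring R] [AddCommMonoid V]
    [Module R V] {A : (ι → V) →ₗ[R] (ι → V)} {i j : ι}
    (hA : ∀ k, k ≠ j → ∀ v, A (Pi.single k v) i = 0) (f : ι → V) :
    A f i = A (Pi.single j (f j)) i := by
  cases nonempty_fintype ι
  rw [map_apply_eq_sum_single]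
  exact Finset.sum_eq_single j (fun k _ hk => hA k hk _) (by simp)

theorem exists_perm_of_apply_single_eq_zero [Finite ι] [Semiring R] [AddCommMonoid V]
    [Module R V] [Nontrivial V] {T : (ι → V) →ₗ[R] (ι → V)}
    (hT : Function.Surjective T)
    (h : ∀ i, ∃ j, ∀ v, ∀ l, l ≠ j → T (Pi.single i v) l = 0) :
    ∃ (σ : Equiv.Perm ι) (S : ι → V →ₗ[R] V), ∀ f i, T f i = S i (f (σ i)) := by
  cases nonempty_fintype ι
  choose τ hτ using h
  have hτ_surj : Function.Surjective τ := by
    intro j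
    by_contra! hj
    obtain ⟨v, hv⟩ := exists_ne (0 : V)
    obtain ⟨f, hf⟩ := hT (Pi.single j v)
    refine hv ?_
    rw [← Pi.single_eq_same (M := fun _ => V) j v, ← hf, map_apply_eq_sum_single]
    exact Finset.sum_eq_zero fun i _ => hτ i _ j (hj i).symm
  let σ : Equiv.Perm ι := (Equiv.ofBijective τ hτ_surj.bijective_of_finite).symm
  refine ⟨σ, fun i => LinearMap.proj i ∘ₗ T ∘ₗ LinearMap.single R (fun _ => V) (σ i),
    fun f i => map_apply_eq_of_apply_single_eq_zero (fun k hk v => hτ k v i ?_) f⟩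
  rintro rfl
  exact hk ((Equiv.ofBijective τ hτ_surj.bijective_of_finite).symm_apply_apply k).symm

/- On `span {p, A p}` the operator `A` is a complex structure commuting with the coordinate
projections. If `p j ≠ 0`, then projecting to the coordinate `j` acts on `p` as multiplication by
a nonzero complex number `α + β A`; composing with the projection to `l ≠ j` annihilates `p`. -/
theorem apply_eq_zero_of_apply_apply_eq_neg [AddCommGroup V] [Module ℝ V]
    {A : (ι → V) →ₗ[ℝ] (ι → V)} (hA : ∀ f i, A f i = A (Pi.single i (f i)) i) {p : ι → V}
    (hAAp : A (A p) = -p) (hrange : ∀ f, ∃ α β : ℝ, A f = α • p + β • A p) {j l : ι}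
    (hj : p j ≠ 0) (hl : l ≠ j) : p l = 0 := by
  have apply_zero {f : ι → V} {i : ι} (hf : f i = 0) : A f i = 0 := by rw [hA, hf]; simp
  obtain ⟨α, β, hαβ⟩ := hrange (Pi.single j (A p j))
  have at_j : α • p j + β • A p j = -p j := by
    rw [← Pi.neg_apply p, ← hAAp, hA (A p), hαβ]; rfl
  have at_l : α • p l + β • A p l = 0 :=
    (congrFun hαβ l).symm.trans (apply_zero (Pi.single_eq_of_ne hl _))
  have at_l' : α • A p l - β • p l = 0 := by
    have := apply_zero (f := α • p + β • A p) at_l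
    rwa [map_add, map_smul, map_smul, hAAp, smul_neg, ← sub_eq_add_neg] at this
  have hsq : (α * α + β * β) • p l = 0 := by
    calc (α * α + β * β) • p l = α • (α • p l + β • A p l) - β • (α • A p l - β • p l) := by module
      _ = 0 := by rw [at_l, at_l', smul_zero, smul_zero, sub_zero]
  refine (smul_eq_zero.1 hsq).resolve_left fun h0 => hj ?_
  obtain ⟨rfl, rfl⟩ := mul_self_add_mul_self_eq_zero.1 h0
  simpa using at_j.symm

end LinearAlgebra

section SkewHermitian

variable {m : ℕ} {N : (Fin m → ℝ) → ℝ}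
  {H : Type*} [NormedAddCommGroup H] [InnerProductSpace ℝ H]

/-- `A` is skew-Hermitian on `Fin m → H` normed by `f ↦ N (fun i => ‖f i‖)`: every supporting
functional at `f` annihilates `A f`. We only test the vectors `f = (x i • h i)` and functionals
`g ↦ ∑ i, y i * ⟪h i, g i⟫` given by a supporting pair `(x, y)` of `N` and unit vectors `h i`. -/
def IsSkewHermitian (N : (Fin m → ℝ) → ℝ) (A : (Fin m → H) →ₗ[ℝ] (Fin m → H)) : Prop :=
  ∀ x y, IsSupportingAt N x y → ∀ h : Fin m → H, (∀ i, ‖h i‖ = 1) →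
    ∑ i, y i * ⟪h i, A (fun j => x j • h j) i⟫ = 0

theorem IsSupportingAt.sum_mul_inner_le (hN : IsLatticeNorm N) {x y : Fin m → ℝ}
    (hxy : IsSupportingAt N x y) {h : Fin m → H} (hh : ∀ i, ‖h i‖ = 1) (f : Fin m → H) :
    ∑ i, y i * ⟪h i, f i⟫ ≤ N fun i => ‖f i‖ :=
  calc ∑ i, y i * ⟪h i, f i⟫ ≤ N fun i => ⟪h i, f i⟫ := hxy.2 _
    _ ≤ N fun i => ‖f i‖ := hN.2.2 _ _ fun i => by
      simpa [hh] using abs_real_inner_le_norm (h i) (f i)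

theorem isSkewHermitian_of_rodrigues_norm_le (hN : IsLatticeNorm N)
    {A : (Fin m → H) →ₗ[ℝ] (Fin m → H)}
    (hA : ∀ f (t : ℝ), N (fun i => ‖(f + (Real.sin t • A f + (1 - Real.cos t) • A (A f))) i‖) ≤
      N fun i => ‖f i‖) : IsSkewHermitian N A := by
  intro x y hxy h hh
  let F : (Fin m → H) →ₗ[ℝ] ℝ := ∑ i, y i • (innerₛₗ ℝ (h i) ∘ₗ LinearMap.proj i)
  have hF (f : Fin m → H) : F f = ∑ i, y i * ⟪h i, f i⟫ := by simp [F]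
  let f : Fin m → H := fun i => x i • h i
  have hFf : F f = N fun i => ‖f i‖ := by
    rw [hF, hN.apply_norm_smul hh, ← hxy.1]
    simp [f, real_inner_smul_right, hh, dotProduct]
  rw [← hF]
  refine eq_zero_of_sin_mul_add_one_sub_cos_mul_nonpos (c := F (A (A f))) fun t => ?_
  have hle := (hF _).trans_le ((hxy.sum_mul_inner_le hN hh _).trans (hA f t))
  rw [map_add, map_add, map_smul, map_smul, hFf] at hle
  simpa using hle

theorem isSkewHermitian_conj_single (hN : IsLatticeNorm N)
    {T : (Fin m → H) ≃ₗ[ℝ] (Fin m → H)} (hT : ∀ f, N (fun i => ‖T f i‖) = N fun i => ‖f i‖)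
    {J : H →ₗ[ℝ] H} (hskew : ∀ w z, ⟪J w, z⟫ = -⟪w, J z⟫) (hcube : ∀ w, J (J (J w)) = -J w)
    (i : Fin m) :
    IsSkewHermitian N
      (T.conj (LinearMap.single ℝ (fun _ => H) i ∘ₗ J ∘ₗ LinearMap.proj i)) := by
  refine isSkewHermitian_of_rodrigues_norm_le hN fun f t => le_of_eq ?_
  obtain ⟨g, rfl⟩ := T.surjective f
  simp only [LinearEquiv.conj_apply_apply, LinearEquiv.symm_apply_apply, ← map_smul, ← map_add, hT]
  congr 1
  ext l
  rcases eq_or_ne l i with rfl | hl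
  · simpa using norm_add_sin_smul_add_one_sub_cos_smul hskew hcube (g l) t
  · simp [hl]

theorem IsSkewHermitian.inner_apply_single_eq_zero {A : (Fin m → H) →ₗ[ℝ] (Fin m → H)}
    (hA : IsSkewHermitian N A) (hN : IsSymmLatticeNorm N) (hE : ¬ IsEuclidean N) {i j : Fin m}
    (hij : i ≠ j) {e e' : H} (he : ‖e‖ = 1) (he' : ‖e'‖ = 1) :
    ⟪e', A (Pi.single j e) i⟫ = 0 := by
  let h : Fin m → H := Function.update (fun _ => e) i e'
  have hh (l : Fin m) : ‖h l‖ = 1 := by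
    rcases eq_or_ne l i with rfl | hl <;> simp [h, *]
  suffices ⟪h i, A (Pi.single j (h j)) i⟫ = 0 by simpa [h, hij.symm] using this
  refine hN.eq_zero_of_isSupportingAt hE hij (c := ⟪h j, A (Pi.single i (h i)) j⟫)
    fun x y hxy => ?_
  let B : Matrix (Fin m) (Fin m) ℝ :=
    Matrix.of fun k l => y k * x l * ⟪h k, A (Pi.single l (h l)) k⟫
  refine add_eq_zero_of_forall_abs_eq_one_dotProduct_mulVec_eq_zero (B := B) (fun ε hε => ?_) hij
  have hεh (l : Fin m) : ‖ε l • h l‖ = 1 := by rw [norm_smul, hh, mul_one, Real.norm_eq_abs, hε]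
  rw [← hA x y hxy _ hεh]
  refine Finset.sum_congr rfl fun k _ => ?_
  rw [map_apply_eq_sum_single, inner_sum, Matrix.mulVec, dotProduct, Finset.mul_sum, Finset.mul_sum]
  refine Finset.sum_congr rfl fun l _ => ?_
  simp only [B, Matrix.of_apply, Pi.single_smul, map_smul, Pi.smul_apply, real_inner_smul_left,
    real_inner_smul_right]
  ring

theorem IsSkewHermitian.apply_single_eq_zero [Nontrivial H] {A : (Fin m → H) →ₗ[ℝ] (Fin m → H)}
    (hA : IsSkewHermitian N A) (hN : IsSymmLatticeNorm N) (hE : ¬ IsEuclidean N) {i j : Fin m}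
    (hij : i ≠ j) (w : H) : A (Pi.single j w) i = 0 := by
  obtain ⟨e, he, hw⟩ := exists_norm_eq_one_and_eq_norm_smul w
  obtain ⟨e', he', hAw⟩ := exists_norm_eq_one_and_eq_norm_smul (A (Pi.single j e) i)
  have hAe : A (Pi.single j e) i = 0 := by
    have := hA.inner_apply_single_eq_zero hN hE hij he he'
    rw [hAw, real_inner_smul_right, real_inner_self_eq_norm_sq, he', one_pow, mul_one] at this
    exact norm_eq_zero.1 this
  rw [hw, Pi.single_smul, map_smul, Pi.smul_apply, hAe, smul_zero]

end SkewHermitian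

section NormPreserving

variable {m : ℕ} {N : (Fin m → ℝ) → ℝ} {R V : Type*} [Semiring R] [NormedAddCommGroup V]
  [Module R V]

theorem IsNorm.injective_of_forall_eq {W : Type*} [SeminormedAddCommGroup W] [Module R W]
    (hN : IsNorm N) {T : (Fin m → V) →ₗ[R] (Fin m → W)}
    (hT : ∀ f, N (fun i => ‖T f i‖) = N fun i => ‖f i‖) : Function.Injective T := by
  refine (injective_iff_map_eq_zero T).2 fun f hf => ?_
  have hNf : N (fun i => ‖f i‖) = 0 := by
    rw [← hT, hN.1]
    simp [hf, funext_iff]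
  ext i
  exact norm_eq_zero.1 (congrFun ((hN.1 _).1 hNf) i)

theorem IsSymmLatticeNorm.norm_apply_of_forall_eq (hN : IsSymmLatticeNorm N)
    {T : (Fin m → V) →ₗ[R] (Fin m → V)} (hT : ∀ f, N (fun i => ‖T f i‖) = N fun i => ‖f i‖)
    {σ : Equiv.Perm (Fin m)} {S : Fin m → V →ₗ[R] V} (hTS : ∀ f i, T f i = S i (f (σ i)))
    (i : Fin m) (w : V) : ‖S i w‖ = ‖w‖ := by
  have hSw : (fun l => ‖T (Pi.single (σ i) w) l‖) = Pi.single i ‖S i w‖ := by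
    ext l
    rcases eq_or_ne l i with rfl | hl <;> simp [*]
  have hw : (fun l => ‖(Pi.single (σ i) w : Fin m → V) l‖) = Pi.single (σ i) ‖w‖ := by
    ext l
    rcases eq_or_ne l (σ i) with rfl | hl <;> simp [*]
  have hpos : N (Pi.single i 1) ≠ 0 := (hN.1.1.pos (by simp)).ne'
  have := hT (Pi.single (σ i) w)
  rw [hSw, hw, hN.apply_single_eq (σ i) i, hN.1.1.apply_single, hN.1.1.apply_single i ‖w‖,
    abs_norm, abs_norm] at this
  exact mul_right_cancel₀ hpos this

end NormPreserving

section Isometry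

variable {m : ℕ} {N : (Fin m → ℝ) → ℝ}
  {H : Type*} [NormedAddCommGroup H] [InnerProductSpace ℝ H]

theorem apply_single_eq_zero_of_apply_single_ne_zero [Nontrivial H] (hN : IsSymmLatticeNorm N)
    (hE : ¬ IsEuclidean N) {T : (Fin m → H) ≃ₗ[ℝ] (Fin m → H)}
    (hT : ∀ f, N (fun i => ‖T f i‖) = N fun i => ‖f i‖) {u v : H} (hu : ‖u‖ = 1) (hv : ‖v‖ = 1)
    (huv : ⟪u, v⟫ = 0) {i j l : Fin m} (hj : T (Pi.single i u) j ≠ 0) (hl : l ≠ j) :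
    T (Pi.single i u) l = 0 ∧ T (Pi.single i v) l = 0 := by
  let J := infinitesimalRotation u v
  let A := T.conj (LinearMap.single ℝ (fun _ => H) i ∘ₗ J ∘ₗ LinearMap.proj i)
  have hA : IsSkewHermitian N A := isSkewHermitian_conj_single hN.1 hT
    (inner_infinitesimalRotation_left u v) (infinitesimalRotation_apply_apply_apply hu hv huv) i
  have hdiag (f : Fin m → H) (k : Fin m) : A f k = A (Pi.single k (f k)) k :=
    map_apply_eq_of_apply_single_eq_zero
      (fun _ hk w => hA.apply_single_eq_zero hN hE hk.symm w) f
  have hA_apply (f : Fin m → H) : A f = T (Pi.single i (J (T.symm f i))) := rfl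
  have hAu : A (T (Pi.single i u)) = T (Pi.single i v) := by
    simp [hA_apply, J, infinitesimalRotation_apply_left hu huv]
  have hAv : A (T (Pi.single i v)) = -T (Pi.single i u) := by
    simp [hA_apply, J, infinitesimalRotation_apply_right hv huv, Pi.single_neg]
  have hrange (f : Fin m → H) :
      ∃ α β : ℝ, A f = α • T (Pi.single i u) + β • A (T (Pi.single i u)) := by
    refine ⟨-⟪v, T.symm f i⟫, ⟪u, T.symm f i⟫, ?_⟩
    rw [hAu, hA_apply, infinitesimalRotation_apply, Pi.single_sub, Pi.single_smul, Pi.single_smul,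
      map_sub, map_smul, map_smul]
    module
  have hul : T (Pi.single i u) l = 0 :=
    apply_eq_zero_of_apply_apply_eq_neg hdiag (hAu ▸ hAv) hrange hj hl
  refine ⟨hul, ?_⟩
  rw [← hAu, hdiag, hul, Pi.single_zero, map_zero, Pi.zero_apply]

theorem exists_forall_apply_single_eq_zero (hN : IsSymmLatticeNorm N) (hE : ¬ IsEuclidean N)
    (hH : 2 ≤ Module.rank ℝ H) {T : (Fin m → H) ≃ₗ[ℝ] (Fin m → H)}
    (hT : ∀ f, N (fun i => ‖T f i‖) = N fun i => ‖f i‖) (i : Fin m) :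
    ∃ j, ∀ w, ∀ l, l ≠ j → T (Pi.single i w) l = 0 := by
  have : Nontrivial H := rank_pos_iff_nontrivial.1 (zero_lt_two.trans_le hH)
  obtain ⟨u, hu⟩ := exists_norm_eq H zero_le_one
  have hTu : T (Pi.single i u) ≠ 0 := by
    simpa [Pi.single_eq_zero_iff] using norm_ne_zero_iff.1 (hu ▸ one_ne_zero)
  obtain ⟨j, hj⟩ := Function.ne_iff.1 hTu
  refine ⟨j, fun w l hl => ?_⟩
  obtain ⟨v, hv, huv, b, hw⟩ := exists_orthogonal_unit_decomposition hH hu w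
  obtain ⟨hul, hvl⟩ := apply_single_eq_zero_of_apply_single_ne_zero hN hE hT hu hv huv hj hl
  rw [hw, Pi.single_add, Pi.single_smul, Pi.single_smul]
  simp [hul, hvl]

theorem isometries_of_finite_symmetric_space_valued_in_hilbert_general
    (hN : IsSymmLatticeNorm N) (hE : ¬ IsEuclidean N) (hH : 2 ≤ Module.rank ℝ H)
    {T : (Fin m → H) →ₗ[ℝ] (Fin m → H)} (hTsurj : Function.Surjective T)
    (hT : ∀ f, N (fun i => ‖T f i‖) = N fun i => ‖f i‖) :
    ∃ (σ : Equiv.Perm (Fin m)) (S : Fin m → H ≃ₗᵢ[ℝ] H), ∀ f i, T f i = S i (f (σ i)) := by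
  have : Nontrivial H := rank_pos_iff_nontrivial.1 (zero_lt_two.trans_le hH)
  obtain ⟨σ, S, hTS⟩ := exists_perm_of_apply_single_eq_zero hTsurj
    (exists_forall_apply_single_eq_zero hN hE hH
      (T := LinearEquiv.ofBijective T ⟨hN.1.1.injective_of_forall_eq hT, hTsurj⟩) hT)
  have hSsurj (i : Fin m) : Function.Surjective (S i) := by
    intro w
    obtain ⟨f, hf⟩ := hTsurj (Pi.single i w)
    exact ⟨f (σ i), by rw [← hTS, hf, Pi.single_eq_same]⟩
  exact ⟨σ, fun i => LinearIsometryEquiv.ofSurjective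
    ⟨S i, hN.norm_apply_of_forall_eq hT hTS i⟩ (hSsurj i), hTS⟩

end Isometry

theorem isometries_of_finite_symmetric_space_valued_in_hilbert
    {m : ℕ} (hm : 2 ≤ m) (N : (Fin m → ℝ) → ℝ)
    (hN : IsSymmLatticeNorm N)
    (hN2 : ¬ ∃ c : ℝ, 0 < c ∧ ∀ x : Fin m → ℝ, N x = c * Real.sqrt (∑ i, x i ^ 2))
    {H : Type*} [NormedAddCommGroup H] [InnerProductSpace ℝ H] [CompleteSpace H]
    [TopologicalSpace.SeparableSpace H] (hdim : 2 ≤ Module.rank ℝ H)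
    (T : (Fin m → H) →ₗ[ℝ] (Fin m → H))
    (hTsurj : Function.Surjective T)
    (hTiso : ∀ f : Fin m → H, N (fun i => ‖T f i‖) = N fun i => ‖f i‖) :
    ∃ (σ : Equiv.Perm (Fin m)) (a : Fin m → ℝ) (S : Fin m → (H →ₗ[ℝ] H)),
      (∀ i, |a i| = 1) ∧
      (∀ i, Function.Surjective (S i)) ∧
      (∀ i (h : H), ‖S i h‖ = ‖h‖) ∧
      ∀ (f : Fin m → H) (i : Fin m), T f i = a i • S i (f (σ i)) := by
  obtain ⟨σ, S, hTS⟩ :=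
    isometries_of_finite_symmetric_space_valued_in_hilbert_general hN hN2 hdim hTsurj hTiso
  exact ⟨σ, 1, fun i => S i, by simp, fun i => (S i).surjective, fun i => (S i).norm_map, by simpa⟩
end

section
/- Let 1 ≤ p < ∞ with p ≠ 2, and let H be a separable real Hilbert space with dim H ≥ 2. Let T be a surjective linear isometry of the space ℓ^p(ℕ; H) of p-summable H-valued sequences (with norm ‖f‖ = (∑_n ‖f n‖_H^p)^{1/p}). Then there exist a permutation σ of ℕ, a map a : ℕ → ℝ with |a n| = 1 for every n, and a family S : ℕ → (H → H) of surjective linear isometries of H, such that for every f ∈ ℓ^p(ℕ; H) and every n, (T f) n = a n • S n (f (σ n)). -/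
open scoped ENNReal

/-!
In an inner product space, the parallelogram law together with the strict convexity (`p > 2`) or
concavity (`p < 2`) of `t ↦ t ^ (p / 2)` shows that
`‖u + v‖ ^ p + ‖u - v‖ ^ p - 2 * (‖u‖ ^ p + ‖v‖ ^ p)` has a constant sign and vanishes only when
`u = 0` or `v = 0`. Summing over the coordinates, the same expression on `ℓ^p` vanishes exactly when
`f` and `g` are disjointly supported, so isometries preserve disjointness. Since `f i = 0` means
that `f` is disjoint from a nonzero element supported at `i`, a surjective isometry `T` maps each
hyperspace `{f | f i = 0}` onto some `{g | g k = 0}`. This matches the coordinates by a bijection,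
and `T f k` depends only on the matching coordinate of `f`.
-/

section Clarkson

theorem mul_rpow_sub_one {x : ℝ} (hx : x ≠ 0) (q : ℝ) : x * x ^ (q - 1) = x ^ q := by
  rw [Real.rpow_sub_one hx, mul_div_cancel₀ _ hx]

theorem rpow_add_rpow_lt_add_rpow {q a b : ℝ} (hq : 1 < q) (ha : 0 < a) (hb : 0 < b) :
    a ^ q + b ^ q < (a + b) ^ q := by
  have hq' : 0 < q - 1 := sub_pos.2 hq
  calc
    a ^ q + b ^ q = a * a ^ (q - 1) + b * b ^ (q - 1) := by
      rw [mul_rpow_sub_one ha.ne', mul_rpow_sub_one hb.ne']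
    _ < a * (a + b) ^ (q - 1) + b * (a + b) ^ (q - 1) := by
      gcongr ?_ * ?_ + ?_ * ?_
      · exact Real.rpow_lt_rpow ha.le (lt_add_of_pos_right a hb) hq'
      · exact Real.rpow_lt_rpow hb.le (lt_add_of_pos_left b ha) hq'
    _ = (a + b) ^ q := by
      rw [← add_mul, mul_rpow_sub_one (add_pos ha hb).ne']

theorem add_rpow_lt_rpow_add_rpow {q a b : ℝ} (hq : q < 1) (ha : 0 < a) (hb : 0 < b) :
    (a + b) ^ q < a ^ q + b ^ q := by
  have hq' : q - 1 < 0 := sub_neg.2 hq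
  calc
    (a + b) ^ q = a * (a + b) ^ (q - 1) + b * (a + b) ^ (q - 1) := by
      rw [← add_mul, mul_rpow_sub_one (add_pos ha hb).ne']
    _ < a * a ^ (q - 1) + b * b ^ (q - 1) := by
      gcongr ?_ * ?_ + ?_ * ?_
      · exact Real.rpow_lt_rpow_of_neg ha (lt_add_of_pos_right a hb) hq'
      · exact Real.rpow_lt_rpow_of_neg hb (lt_add_of_pos_left b ha) hq'
    _ = a ^ q + b ^ q := by
      rw [mul_rpow_sub_one ha.ne', mul_rpow_sub_one hb.ne']

theorem two_mul_half_add_rpow_le_rpow_add_rpow {q x y : ℝ} (hq : 1 ≤ q) (hx : 0 ≤ x)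
    (hy : 0 ≤ y) : 2 * ((x + y) / 2) ^ q ≤ x ^ q + y ^ q := by
  have h := (convexOn_rpow hq).2 (Set.mem_Ici.2 hx) (Set.mem_Ici.2 hy)
    one_half_pos.le one_half_pos.le (add_halves 1)
  simp only [smul_eq_mul, one_div_mul_eq_div, ← add_div] at h
  linarith

theorem rpow_add_rpow_le_two_mul_half_add_rpow {q x y : ℝ} (hq₀ : 0 ≤ q) (hq₁ : q ≤ 1)
    (hx : 0 ≤ x) (hy : 0 ≤ y) : x ^ q + y ^ q ≤ 2 * ((x + y) / 2) ^ q := by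
  have h := (Real.concaveOn_rpow hq₀ hq₁).2 (Set.mem_Ici.2 hx) (Set.mem_Ici.2 hy)
    one_half_pos.le one_half_pos.le (add_halves 1)
  simp only [smul_eq_mul, one_div_mul_eq_div, ← add_div] at h
  linarith

/-- The amount by which the parallelogram law with exponent `r` in place of `2` fails for `u`
and `v`, as in Clarkson's inequalities. Only a `Norm` is required, so that it also applies to
`lp E p` with `p < 1`. -/
noncomputable def clarksonDefect {V : Type*} [AddGroup V] [Norm V] (r : ℝ) (u v : V) : ℝ :=
  ‖u + v‖ ^ r + ‖u - v‖ ^ r - 2 * (‖u‖ ^ r + ‖v‖ ^ r)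

section SeminormedAddCommGroup

variable {V : Type*} [SeminormedAddCommGroup V] {r : ℝ}

theorem clarksonDefect_zero_left (hr : r ≠ 0) (v : V) : clarksonDefect r 0 v = 0 := by
  simp only [clarksonDefect, zero_add, zero_sub, norm_neg, norm_zero, Real.zero_rpow hr]
  ring

theorem clarksonDefect_zero_right (hr : r ≠ 0) (u : V) : clarksonDefect r u 0 = 0 := by
  simp only [clarksonDefect, add_zero, sub_zero, norm_zero, Real.zero_rpow hr]
  ring

theorem norm_rpow_eq_sq_rpow_half (r : ℝ) (u : V) : ‖u‖ ^ r = (‖u‖ ^ 2) ^ (r / 2) := by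
  rw [← Real.rpow_natCast_mul (norm_nonneg u), Nat.cast_ofNat, mul_div_cancel₀ r two_ne_zero]

end SeminormedAddCommGroup

section InnerProductSpace

variable (𝕜 : Type*) {V : Type*} [RCLike 𝕜] [NormedAddCommGroup V] [InnerProductSpace 𝕜 V]
  {r : ℝ} {u v : V}

include 𝕜

theorem half_norm_add_sq_add_norm_sub_sq (u v : V) :
    (‖u + v‖ ^ 2 + ‖u - v‖ ^ 2) / 2 = ‖u‖ ^ 2 + ‖v‖ ^ 2 := by
  rw [parallelogram_law_with_norm 𝕜 u v, mul_div_cancel_left₀ _ two_ne_zero]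

theorem clarksonDefect_pos (hr : 2 < r) (hu : u ≠ 0) (hv : v ≠ 0) :
    0 < clarksonDefect r u v := by
  refine sub_pos.2 ?_
  simp only [norm_rpow_eq_sq_rpow_half r]
  calc
    2 * ((‖u‖ ^ 2) ^ (r / 2) + (‖v‖ ^ 2) ^ (r / 2)) < 2 * (‖u‖ ^ 2 + ‖v‖ ^ 2) ^ (r / 2) := by
      gcongr
      exact rpow_add_rpow_lt_add_rpow (by linarith) (by positivity) (by positivity)
    _ = 2 * ((‖u + v‖ ^ 2 + ‖u - v‖ ^ 2) / 2) ^ (r / 2) := by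
      rw [half_norm_add_sq_add_norm_sub_sq 𝕜]
    _ ≤ (‖u + v‖ ^ 2) ^ (r / 2) + (‖u - v‖ ^ 2) ^ (r / 2) :=
      two_mul_half_add_rpow_le_rpow_add_rpow (by linarith) (sq_nonneg _) (sq_nonneg _)

theorem clarksonDefect_neg (hr₀ : 0 ≤ r) (hr₂ : r < 2) (hu : u ≠ 0) (hv : v ≠ 0) :
    clarksonDefect r u v < 0 := by
  refine sub_neg.2 ?_
  simp only [norm_rpow_eq_sq_rpow_half r]
  calc
    (‖u + v‖ ^ 2) ^ (r / 2) + (‖u - v‖ ^ 2) ^ (r / 2)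
      ≤ 2 * ((‖u + v‖ ^ 2 + ‖u - v‖ ^ 2) / 2) ^ (r / 2) :=
      rpow_add_rpow_le_two_mul_half_add_rpow (by linarith) (by linarith) (sq_nonneg _)
        (sq_nonneg _)
    _ = 2 * (‖u‖ ^ 2 + ‖v‖ ^ 2) ^ (r / 2) := by
      rw [half_norm_add_sq_add_norm_sub_sq 𝕜]
    _ < 2 * ((‖u‖ ^ 2) ^ (r / 2) + (‖v‖ ^ 2) ^ (r / 2)) := by
      gcongr
      exact add_rpow_lt_rpow_add_rpow (by linarith) (by positivity) (by positivity)

theorem clarksonDefect_eq_zero_iff (hr₀ : 0 < r) (hr₂ : r ≠ 2) :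
    clarksonDefect r u v = 0 ↔ u = 0 ∨ v = 0 := by
  constructor
  · contrapose!
    rintro ⟨hu, hv⟩
    rcases hr₂.lt_or_gt with hlt | hgt
    · exact (clarksonDefect_neg 𝕜 hr₀.le hlt hu hv).ne
    · exact (clarksonDefect_pos 𝕜 hgt hu hv).ne'
  · rintro (rfl | rfl)
    · exact clarksonDefect_zero_left hr₀.ne' v
    · exact clarksonDefect_zero_right hr₀.ne' u

theorem clarksonDefect_nonneg (hr : 2 < r) (u v : V) : 0 ≤ clarksonDefect r u v := by
  by_cases h : u = 0 ∨ v = 0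
  · exact ((clarksonDefect_eq_zero_iff 𝕜 (by linarith) hr.ne').2 h).ge
  · exact (clarksonDefect_pos 𝕜 hr (not_or.1 h).1 (not_or.1 h).2).le

theorem clarksonDefect_nonpos (hr₀ : 0 < r) (hr₂ : r < 2) (u v : V) :
    clarksonDefect r u v ≤ 0 := by
  by_cases h : u = 0 ∨ v = 0
  · exact ((clarksonDefect_eq_zero_iff 𝕜 hr₀ hr₂.ne).2 h).le
  · exact (clarksonDefect_neg 𝕜 hr₀.le hr₂ (not_or.1 h).1 (not_or.1 h).2).le

end InnerProductSpace

end Clarkson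

section DisjointSupports

variable {ι κ : Type*} {E : ι → Type*} {F : κ → Type*} {p q : ℝ≥0∞}

/-- Two elements of `lp E p` are disjoint: at every coordinate at least one of them vanishes. -/
def DisjointSupports [∀ i, NormedAddCommGroup (E i)] (f g : lp E p) : Prop :=
  ∀ i, f i = 0 ∨ g i = 0

section Isometry

theorem hasSum_clarksonDefect [∀ i, NormedAddCommGroup (E i)] (hp : 0 < p.toReal)
    (f g : lp E p) :
    HasSum (fun i => clarksonDefect p.toReal (f i) (g i)) (clarksonDefect p.toReal f g) :=
  ((lp.hasSum_norm hp (f + g)).add (lp.hasSum_norm hp (f - g))).sub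
    (((lp.hasSum_norm hp f).add (lp.hasSum_norm hp g)).mul_left 2)

variable (𝕜 : Type*) [RCLike 𝕜]
  [∀ i, NormedAddCommGroup (E i)] [∀ i, InnerProductSpace 𝕜 (E i)]
  [∀ k, NormedAddCommGroup (F k)] [∀ k, InnerProductSpace 𝕜 (F k)]

include 𝕜

theorem clarksonDefect_lp_eq_zero_iff (hp₀ : 0 < p.toReal) (hp₂ : p.toReal ≠ 2)
    (f g : lp E p) : clarksonDefect p.toReal f g = 0 ↔ DisjointSupports f g := by
  have hsum := hasSum_clarksonDefect hp₀ f g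
  have hzero : DisjointSupports f g ↔ (fun i => clarksonDefect p.toReal (f i) (g i)) = 0 := by
    simp only [DisjointSupports, funext_iff, Pi.zero_apply,
      clarksonDefect_eq_zero_iff 𝕜 hp₀ hp₂]
  rw [hzero]
  refine ⟨fun h => ?_, fun h => (h ▸ hsum).unique hasSum_zero⟩
  rw [h] at hsum
  rcases hp₂.lt_or_gt with hlt | hgt
  · have hsum_neg := hsum.neg
    rw [neg_zero] at hsum_neg
    exact neg_eq_zero.1 <| (hasSum_zero_iff_of_nonneg fun i =>
      neg_nonneg.2 (clarksonDefect_nonpos 𝕜 hp₀ hlt (f i) (g i))).1 hsum_neg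
  · exact (hasSum_zero_iff_of_nonneg fun i => clarksonDefect_nonneg 𝕜 hgt (f i) (g i)).1 hsum

theorem DisjointSupports.map_of_norm_map (hp₀ : 0 < p.toReal) (hp₂ : p.toReal ≠ 2)
    (T : lp E p →+ lp F p) (hT : ∀ f, ‖T f‖ = ‖f‖) {f g : lp E p}
    (h : DisjointSupports f g) : DisjointSupports (T f) (T g) := by
  rw [← clarksonDefect_lp_eq_zero_iff 𝕜 hp₀ hp₂] at h ⊢
  simpa only [clarksonDefect, ← map_add, ← map_sub, hT] using h

end Isometry

section Coordinates

variable [∀ i, NormedAddCommGroup (E i)] [∀ k, NormedAddCommGroup (F k)]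

theorem eq_of_forall_lp_apply_eq_zero_imp {i j : ι} [Nontrivial (E j)]
    (h : ∀ f : lp E p, f i = 0 → f j = 0) : i = j := by
  classical
  obtain ⟨v, hv⟩ := exists_ne (0 : E j)
  by_contra hij
  exact hv (lp.single_apply_self (E := E) p j v ▸ h _ (lp.single_apply_ne p j v hij))

theorem exists_forall_apply_eq_zero_imp_of_disjointSupports (T : lp E p →+ lp F q)
    (hinj : Function.Injective T)
    (hT : ∀ {f g}, DisjointSupports f g → DisjointSupports (T f) (T g))
    (i : ι) [Nontrivial (E i)] : ∃ k, ∀ f, f i = 0 → T f k = 0 := by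
  classical
  obtain ⟨v, hv⟩ := exists_ne (0 : E i)
  have hsingle : lp.single p i v ≠ 0 := fun h =>
    hv (by rw [← lp.single_apply_self (E := E) p i v, h, lp.coeFn_zero, Pi.zero_apply])
  obtain ⟨k, hk⟩ : ∃ k, T (lp.single p i v) k ≠ 0 := by
    by_contra! h
    exact (map_ne_zero_iff T hinj).2 hsingle (lp.ext (funext h))
  refine ⟨k, fun f hf => (hT (fun j => ?_) k).resolve_right hk⟩
  rcases eq_or_ne j i with rfl | hj
  · exact Or.inl hf
  · exact Or.inr (lp.single_apply_ne p i v hj)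

theorem exists_equiv_apply_eq_zero_iff_of_disjointSupports
    [∀ i, Nontrivial (E i)] [∀ k, Nontrivial (F k)] (T : lp E p ≃+ lp F q)
    (hT : ∀ {f g}, DisjointSupports f g → DisjointSupports (T f) (T g))
    (hT' : ∀ {f g}, DisjointSupports f g → DisjointSupports (T.symm f) (T.symm g)) :
    ∃ σ : κ ≃ ι, ∀ f k, T f k = 0 ↔ f (σ k) = 0 := by
  choose τ hτ using fun i => exists_forall_apply_eq_zero_imp_of_disjointSupports
    (T : lp E p →+ lp F q) T.injective hT i
  choose σ hσ using fun k => exists_forall_apply_eq_zero_imp_of_disjointSupports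
    (T.symm : lp F q →+ lp E p) T.symm.injective hT' k
  have apply_σ_eq_zero (k : κ) (f : lp E p) (h : T f k = 0) : f (σ k) = 0 := by
    simpa using hσ k (T f) h
  have apply_τ_eq_zero (i : ι) (g : lp F q) (h : T.symm g i = 0) : g (τ i) = 0 := by
    simpa using hτ i (T.symm g) h
  have τ_σ (k : κ) : τ (σ k) = k :=
    (eq_of_forall_lp_apply_eq_zero_imp fun g hg => apply_τ_eq_zero (σ k) g (hσ k g hg)).symm
  have σ_τ (i : ι) : σ (τ i) = i :=
    (eq_of_forall_lp_apply_eq_zero_imp fun f hf => apply_σ_eq_zero (τ i) f (hτ i f hf)).symm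
  exact ⟨⟨σ, τ, τ_σ, σ_τ⟩, fun f k => ⟨apply_σ_eq_zero k f, fun h => τ_σ k ▸ hτ (σ k) f h⟩⟩

variable {𝕜 : Type*} [NormedRing 𝕜] [∀ i, Module 𝕜 (E i)] [∀ i, IsBoundedSMul 𝕜 (E i)]
  [∀ k, Module 𝕜 (F k)] [∀ k, IsBoundedSMul 𝕜 (F k)]

theorem exists_linearIsometryEquiv_of_apply_eq_zero_iff (hp : p ≠ 0) (hq : q ≠ 0)
    (T : lp E p ≃ₗ[𝕜] lp F q) (hnorm : ∀ f, ‖T f‖ = ‖f‖) (σ : κ ≃ ι)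
    (hσ : ∀ f k, T f k = 0 ↔ f (σ k) = 0) :
    ∃ S : ∀ k, E (σ k) ≃ₗᵢ[𝕜] F k, ∀ f k, T f k = S k (f (σ k)) := by
  classical
  let S (k : κ) : E (σ k) →ₗ[𝕜] F k :=
    lp.evalₗ F q k ∘ₗ T.toLinearMap ∘ₗ lp.lsingle p (σ k)
  have S_apply (k : κ) (v : E (σ k)) : S k v = T (lp.single p (σ k) v) k := rfl
  have T_single (k : κ) (v : E (σ k)) : T (lp.single p (σ k) v) = lp.single q k (S k v) := by
    ext l
    rcases eq_or_ne l k with rfl | hl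
    · rw [lp.single_apply_self, S_apply]
    · rw [lp.single_apply_ne _ _ _ hl, hσ, lp.single_apply_ne _ _ _ (σ.injective.ne hl)]
  have norm_S (k : κ) (v : E (σ k)) : ‖S k v‖ = ‖v‖ := by
    rw [← lp.norm_single (E := F) hq.bot_lt k, ← T_single, hnorm, lp.norm_single hp.bot_lt]
  have T_apply (f : lp E p) (k : κ) : T f k = S k (f (σ k)) := by
    have sub_single_apply : (f - lp.single p (σ k) (f (σ k))) (σ k) = 0 := by
      rw [lp.coeFn_sub, Pi.sub_apply, lp.single_apply_self, sub_self]
    rw [← hσ, map_sub, lp.coeFn_sub, Pi.sub_apply, sub_eq_zero] at sub_single_apply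
    rw [sub_single_apply, S_apply]
  have surjective_S (k : κ) : Function.Surjective (S k) := fun w =>
    ⟨T.symm (lp.single q k w) (σ k), by
      rw [← T_apply, T.apply_symm_apply, lp.single_apply_self]⟩
  exact ⟨fun k => .ofSurjective ⟨S k, norm_S k⟩ (surjective_S k), T_apply⟩

end Coordinates

end DisjointSupports

theorem lp_hilbert_valued_isometries_canonical_form_general
    {𝕜 ι κ : Type*} [RCLike 𝕜] {E : ι → Type*} {F : κ → Type*}
    [∀ i, NormedAddCommGroup (E i)] [∀ i, InnerProductSpace 𝕜 (E i)] [∀ i, Nontrivial (E i)]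
    [∀ k, NormedAddCommGroup (F k)] [∀ k, InnerProductSpace 𝕜 (F k)] [∀ k, Nontrivial (F k)]
    {p : ℝ≥0∞} (hp₀ : p ≠ 0) (hptop : p ≠ ∞) (hp₂ : p ≠ 2)
    (T : lp E p ≃ₗ[𝕜] lp F p) (hT : ∀ f, ‖T f‖ = ‖f‖) :
    ∃ (σ : κ ≃ ι) (S : ∀ k, E (σ k) ≃ₗᵢ[𝕜] F k), ∀ f k, T f k = S k (f (σ k)) := by
  have toReal_pos : 0 < p.toReal := ENNReal.toReal_pos hp₀ hptop
  have toReal_ne_two : p.toReal ≠ 2 := fun h =>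
    hp₂ ((ENNReal.toReal_eq_toReal_iff' hptop ENNReal.ofNat_ne_top).1 h)
  have hT_symm (g : lp F p) : ‖T.symm g‖ = ‖g‖ := by rw [← hT, T.apply_symm_apply]
  obtain ⟨σ, hσ⟩ := exists_equiv_apply_eq_zero_iff_of_disjointSupports T.toAddEquiv
    (.map_of_norm_map 𝕜 toReal_pos toReal_ne_two T.toAddEquiv.toAddMonoidHom hT)
    (.map_of_norm_map 𝕜 toReal_pos toReal_ne_two T.symm.toAddEquiv.toAddMonoidHom hT_symm)
  exact ⟨σ, exists_linearIsometryEquiv_of_apply_eq_zero_iff hp₀ hp₀ T hT σ hσ⟩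

/-- Surjective isometries of `ℓ^p(ℕ; H)`, `1 ≤ p < ∞`, `p ≠ 2`, `H` a separable real
Hilbert space of dimension at least 2, have canonical vector form. -/
theorem lp_hilbert_valued_isometries_canonical_form
    (p : ℝ≥0∞) [Fact (1 ≤ p)] (hp1 : 1 ≤ p) (hptop : p ≠ ∞) (hp2 : p ≠ 2)
    {H : Type*} [NormedAddCommGroup H] [InnerProductSpace ℝ H] [CompleteSpace H]
    [TopologicalSpace.SeparableSpace H] (hdim : 2 ≤ Module.rank ℝ H)
    (T : lp (fun _ : ℕ => H) p →ₗ[ℝ] lp (fun _ : ℕ => H) p)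
    (hTsurj : Function.Surjective T)
    (hTiso : ∀ f, ‖T f‖ = ‖f‖) :
    ∃ (σ : Equiv.Perm ℕ) (a : ℕ → ℝ) (S : ℕ → (H →ₗ[ℝ] H)),
      (∀ n, |a n| = 1) ∧
      (∀ n, Function.Surjective (S n)) ∧
      (∀ n (h : H), ‖S n h‖ = ‖h‖) ∧
      ∀ (f : lp (fun _ : ℕ => H) p) (n : ℕ),
        (T f : ∀ _ : ℕ, H) n = a n • S n ((f : ∀ _ : ℕ, H) (σ n)) := by
  have : Nontrivial H := rank_pos_iff_nontrivial.1 (two_pos.trans_le hdim)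
  obtain ⟨σ, S, hS⟩ := lp_hilbert_valued_isometries_canonical_form_general
    (one_pos.trans_le hp1).ne' hptop hp2
    (LinearIsometryEquiv.ofSurjective ⟨T, hTiso⟩ hTsurj).toLinearEquiv hTiso
  exact ⟨σ, 1, fun n => (S n).toLinearEquiv, fun _ => abs_one, fun n => (S n).surjective,
    fun n => (S n).norm_map, fun f n => (hS f n).trans (one_smul ℝ _).symm⟩
end

section
/- Let m ≥ 2 and let N be a symmetric lattice norm on ℝ^m (functions Fin m → ℝ) that is not proportional to the Euclidean norm. Let H be an infinite-dimensional separable real Hilbert space, and equip X = (Fin m → H) with the norm ‖f‖ = N(fun i => ‖f i‖_H). Then every surjective linear isometry T : X → X preserves disjointness in the vector sense: if f, g ∈ X satisfy ‖f i‖_H · ‖g i‖_H = 0 for every i, then ‖(T f) i‖_H · ‖(T g) i‖_H = 0 for every i. -/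
open scoped RealInnerProductSpace

/-!
Call an operator `A` skew for a norm if `x ↦ x + t • A x` expands the norm by at most
`1 + O(t ^ 2)`. A surjective isometry `T` conjugates skew operators into skew operators. Averaging a
skew matrix for `N` over sign changes isolates a pair of opposite entries; if these do not vanish
they yield the generator of a coordinate rotation, whose flow preserves `N`, and then symmetry makes
`N` Euclidean. So for non-Euclidean `N` every skew operator on the vector-valued space is block
diagonal. Applied to the conjugates by `T` of the skew operators `v ↦ ⟪h, v⟫ k - ⟪k, v⟫ h` acting in
one coordinate, this forces `T` to carry each coordinate copy of `H` into a single coordinate.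
-/

open Filter Topology

section Skew

variable {E F : Type*} [AddCommGroup E] [Module ℝ E] [AddCommGroup F] [Module ℝ F]
  {p : Seminorm ℝ E} {q : Seminorm ℝ F}

/-- The space of operators `A` that are skew for the seminorm `p`, meaning that `x ↦ x + t • A x`
expands `p` by a factor of at most `1 + O(t ^ 2)`; for a Hilbert norm these are the bounded
skew-adjoint operators. -/
def skewOperators (p : Seminorm ℝ E) : Submodule ℝ (Module.End ℝ E) where
  carrier := {A | ∃ C : ℝ, ∀ x (t : ℝ), p (x + t • A x) ≤ (1 + C * t ^ 2) * p x}
  zero_mem' := ⟨0, fun x t ↦ by simp⟩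
  add_mem' := by
    rintro A B ⟨C, hA⟩ ⟨D, hB⟩
    refine ⟨2 * (C + D), fun x t ↦ ?_⟩
    have midpoint : x + t • (A + B) x
        = (1 / 2 : ℝ) • (x + (2 * t) • A x) + (1 / 2 : ℝ) • (x + (2 * t) • B x) := by
      rw [LinearMap.add_apply]; module
    calc p (x + t • (A + B) x)
        ≤ 1 / 2 * p (x + (2 * t) • A x) + 1 / 2 * p (x + (2 * t) • B x) := by
          rw [midpoint]
          refine (map_add_le_add p _ _).trans_eq ?_
          simp only [map_smul_eq_mul, Real.norm_of_nonneg one_half_pos.le]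
      _ ≤ 1 / 2 * ((1 + C * (2 * t) ^ 2) * p x) + 1 / 2 * ((1 + D * (2 * t) ^ 2) * p x) := by
          gcongr
          exacts [hA x _, hB x _]
      _ = (1 + 2 * (C + D) * t ^ 2) * p x := by ring
  smul_mem' := by
    rintro c A ⟨C, hA⟩
    refine ⟨C * c ^ 2, fun x t ↦ ?_⟩
    simpa only [LinearMap.smul_apply, smul_smul, mul_pow, mul_comm (t ^ 2), mul_assoc]
      using hA x (t * c)

theorem comp_mem_skewOperators {A : Module.End ℝ E} (hA : A ∈ skewOperators p)
    {ι : F →ₗ[ℝ] E} {π : E →ₗ[ℝ] F} (hι : ∀ x, p (ι x) = q x) (hπ : ∀ x, q (π x) ≤ p x)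
    (hπι : ∀ x, π (ι x) = x) : π ∘ₗ A ∘ₗ ι ∈ skewOperators q := by
  obtain ⟨C, hA⟩ := hA
  refine ⟨C, fun x t ↦ ?_⟩
  calc q (x + t • π (A (ι x))) = q (π (ι x + t • A (ι x))) := by
          rw [map_add π, map_smul π, hπι]
    _ ≤ p (ι x + t • A (ι x)) := hπ _
    _ ≤ (1 + C * t ^ 2) * q x := hι x ▸ hA (ι x) t

theorem eq_zero_of_forall_mul_le_mul_sq {R : Type*} [Field R] [LinearOrder R]
    [IsStrictOrderedRing R] {a C : R} (h : ∀ t : R, t * a ≤ C * t ^ 2) : a = 0 := by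
  have discrim_nonpos : discrim C (-a) 0 ≤ 0 := discrim_le_zero fun t ↦ by linarith [h t]
  rw [discrim] at discrim_nonpos
  nlinarith

theorem eq_zero_of_mem_skewOperators_of_apply_eq_smul {A : Module.End ℝ E}
    (hA : A ∈ skewOperators p) {x : E} (hx : p x ≠ 0) {a : ℝ} (hAx : A x = a • x) : a = 0 := by
  obtain ⟨C, hA⟩ := hA
  have hpos : 0 < p x := (apply_nonneg p x).lt_of_ne' hx
  refine eq_zero_of_forall_mul_le_mul_sq (C := C) fun t ↦ ?_
  have scaled : |1 + t * a| * p x ≤ (1 + C * t ^ 2) * p x := by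
    rw [← Real.norm_eq_abs, ← map_smul_eq_mul, add_smul, one_smul, mul_smul, ← hAx]
    exact hA x t
  linarith [le_abs_self (1 + t * a), le_of_mul_le_mul_right scaled hpos]

end Skew

section Flow

variable {E : Type*} [NormedAddCommGroup E] [NormedSpace ℝ E] {p : Seminorm ℝ E}
  {A : Module.End ℝ E} {γ : ℝ → E}

theorem antitone_seminorm_of_hasDerivAt_mem_skewOperators (hp : Continuous p)
    (hA : A ∈ skewOperators p) (hγ : ∀ t, HasDerivAt γ (A (γ t)) t) : Antitone (p ∘ γ) := by
  obtain ⟨C, hA⟩ := hA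
  have hcont : Continuous (p ∘ γ) :=
    hp.comp (continuous_iff_continuousAt.2 fun t ↦ (hγ t).continuousAt)
  have slope_le (s t : ℝ) (hst : s < t) :
      slope (p ∘ γ) s t ≤ C * (t - s) * p (γ s) + p (slope γ s t - A (γ s)) := by
    have hpos : 0 < t - s := sub_pos.2 hst
    have taylor : γ t = (γ s + (t - s) • A (γ s)) + (t - s) • (slope γ s t - A (γ s)) := by
      rw [smul_sub, sub_smul_slope, vsub_eq_sub]; abel
    have bound : p (γ t) ≤ (1 + C * (t - s) ^ 2) * p (γ s)
        + (t - s) * p (slope γ s t - A (γ s)) := by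
      conv_lhs => rw [taylor]
      refine (map_add_le_add p _ _).trans (add_le_add (hA _ _) ?_)
      rw [map_smul_eq_mul, Real.norm_of_nonneg hpos.le]
    rw [slope_def_field, div_le_iff₀ hpos, Function.comp_apply, Function.comp_apply]
    linarith
  have error_tendsto (s : ℝ) :
      Tendsto (fun t ↦ C * (t - s) * p (γ s) + p (slope γ s t - A (γ s))) (𝓝[>] s) (𝓝 0) := by
    have hlin : Tendsto (fun t ↦ C * (t - s) * p (γ s)) (𝓝[>] s) (𝓝 0) :=
      (Continuous.tendsto' (by fun_prop) s 0 (by simp)).mono_left nhdsWithin_le_nhds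
    have hslope : Tendsto (fun t ↦ slope γ s t - A (γ s)) (𝓝[>] s) (𝓝 0) := by
      have := (hasDerivAt_iff_tendsto_slope.1 (hγ s)).mono_left (nhdsGT_le_nhdsNE s)
      simpa using this.sub_const (A (γ s))
    simpa using hlin.add ((hp.tendsto' 0 0 (map_zero p)).comp hslope)
  intro a b hab
  refine image_le_of_liminf_slope_right_le_deriv_boundary (B := fun _ ↦ p (γ a)) (B' := 0)
    hcont.continuousOn le_rfl continuousOn_const (fun _ _ ↦ hasDerivWithinAt_const ..)
    (fun s _ r hr ↦ Eventually.frequently ?_) (Set.right_mem_Icc.2 hab)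
  filter_upwards [(error_tendsto s).eventually_lt_const hr, self_mem_nhdsWithin] with t hlt hst
  exact (slope_le s t hst).trans_lt hlt

theorem seminorm_eq_of_hasDerivAt_mem_skewOperators (hp : Continuous p)
    (hA : A ∈ skewOperators p) (hγ : ∀ t, HasDerivAt γ (A (γ t)) t) (s t : ℝ) :
    p (γ s) = p (γ t) := by
  have hanti := antitone_seminorm_of_hasDerivAt_mem_skewOperators hp hA hγ
  have hanti_rev : Antitone (p ∘ fun t ↦ γ (-t)) := by
    refine antitone_seminorm_of_hasDerivAt_mem_skewOperators hp (neg_mem hA) fun t ↦ ?_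
    convert! (hγ (-t)).scomp t (hasDerivAt_neg t) using 1
    rw [LinearMap.neg_apply, neg_one_smul]
  have hmono : Monotone (p ∘ γ) := fun a b hab ↦ by simpa using hanti_rev (neg_le_neg hab)
  rcases le_total s t with hst | hst
  exacts [(hmono hst).antisymm (hanti hst), (hanti hst).antisymm (hmono hst)]

theorem seminorm_rotation_eq (hp : Continuous p) (hA : A ∈ skewOperators p) {u v w : E}
    (hu : A u = v) (hv : A v = -u) (hw : A w = 0) (θ : ℝ) :
    p (w + (Real.cos θ • u + Real.sin θ • v)) = p (w + u) := by
  have hγ (t : ℝ) : HasDerivAt (fun t ↦ w + (Real.cos t • u + Real.sin t • v))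
      (A (w + (Real.cos t • u + Real.sin t • v))) t := by
    convert! (((Real.hasDerivAt_cos t).smul_const u).add
      ((Real.hasDerivAt_sin t).smul_const v)).const_add w using 1
    rw [map_add, map_add, map_smul, map_smul, hu, hv, hw]
    module
  simpa using seminorm_eq_of_hasDerivAt_mem_skewOperators hp hA hγ θ 0

end Flow

section Mixed

variable {m : ℕ} {N : (Fin m → ℝ) → ℝ} (hN : IsLatticeNorm N)
  {H K : Type*} [NormedAddCommGroup H] [NormedSpace ℝ H] [NormedAddCommGroup K] [NormedSpace ℝ K]

variable (H) in
/-- The norm `‖f‖ = N (fun i ↦ ‖f i‖)` of the `H`-valued sequence space built on the lattice norm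
`N`; the case `H = ℝ` is `N` itself. -/
noncomputable def IsLatticeNorm.mixed : Seminorm ℝ (Fin m → H) :=
  Seminorm.of (fun f ↦ N fun i ↦ ‖f i‖)
    (fun f g ↦ (hN.2.2 _ _ fun i ↦ by
      rw [Pi.add_apply, abs_norm]
      exact (norm_add_le _ _).trans (le_abs_self _)).trans
        (hN.1.2.2 (fun i ↦ ‖f i‖) fun i ↦ ‖g i‖))
    (fun c f ↦ by
      rw [Real.norm_eq_abs, ← abs_abs c, ← hN.1.2.1]
      simp only [Pi.smul_apply, norm_smul, Real.norm_eq_abs]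
      rfl)

theorem IsLatticeNorm.mixed_apply (f : Fin m → H) : hN.mixed H f = N fun i ↦ ‖f i‖ := rfl

theorem IsLatticeNorm.mixed_real_apply (x : Fin m → ℝ) : hN.mixed ℝ x = N x :=
  (hN.2.1 x).symm

theorem IsLatticeNorm.mixed_mono {f : Fin m → H} {g : Fin m → K} (h : ∀ i, ‖f i‖ ≤ ‖g i‖) :
    hN.mixed H f ≤ hN.mixed K g :=
  hN.2.2 _ _ fun i ↦ by simpa only [abs_norm] using h i

theorem IsLatticeNorm.mixed_congr {f : Fin m → H} {g : Fin m → K} (h : ∀ i, ‖f i‖ = ‖g i‖) :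
    hN.mixed H f = hN.mixed K g :=
  (hN.mixed_mono fun i ↦ (h i).le).antisymm (hN.mixed_mono fun i ↦ (h i).ge)

theorem IsLatticeNorm.mixed_eq_zero {f : Fin m → H} : hN.mixed H f = 0 ↔ f = 0 := by
  rw [hN.mixed_apply, hN.1.1, funext_iff, funext_iff]
  simp only [Pi.zero_apply, norm_eq_zero]

theorem single_comp_proj_mem_skewOperators {a : Module.End ℝ H}
    (ha : a ∈ skewOperators (normSeminorm ℝ H)) (i : Fin m) :
    LinearMap.single ℝ (fun _ ↦ H) i ∘ₗ a ∘ₗ LinearMap.proj i ∈ skewOperators (hN.mixed H) := by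
  obtain ⟨C, ha⟩ := ha
  refine ⟨|C|, fun f t ↦ ?_⟩
  have factor_nonneg : 0 ≤ 1 + |C| * t ^ 2 := by positivity
  rw [← Real.norm_of_nonneg factor_nonneg, ← map_smul_eq_mul]
  refine hN.mixed_mono fun l ↦ ?_
  rw [Pi.smul_apply, norm_smul, Real.norm_of_nonneg factor_nonneg]
  by_cases hl : l = i
  · subst hl
    calc ‖f l + t • (Pi.single l (a (f l)) : Fin m → H) l‖ = ‖f l + t • a (f l)‖ := by
          rw [Pi.single_eq_same]
      _ ≤ (1 + C * t ^ 2) * ‖f l‖ := ha (f l) t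
      _ ≤ (1 + |C| * t ^ 2) * ‖f l‖ := by gcongr; exact le_abs_self C
  · calc ‖f l + t • (Pi.single i (a (f i)) : Fin m → H) l‖ = 1 * ‖f l‖ := by
          rw [Pi.single_eq_of_ne hl, smul_zero, add_zero, one_mul]
      _ ≤ (1 + |C| * t ^ 2) * ‖f l‖ := by gcongr; exact le_add_of_nonneg_right (by positivity)

end Mixed

section SkewMatrix

open Matrix

variable {m : ℕ} {N : (Fin m → ℝ) → ℝ} {M : Matrix (Fin m) (Fin m) ℝ} {i j : Fin m}

/-- The matrices of the operators that are skew for the lattice norm `N`. -/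
noncomputable def IsLatticeNorm.skewMatrices (hN : IsLatticeNorm N) :
    Submodule ℝ (Matrix (Fin m) (Fin m) ℝ) :=
  (skewOperators (hN.mixed ℝ)).comap Matrix.toLin'.toLinearMap

theorem diagonal_mul_mul_diagonal_mem_skewMatrices (hN : IsLatticeNorm N)
    (hM : M ∈ hN.skewMatrices) {ε : Fin m → ℝ} (hε : ∀ k, ε k * ε k = 1) :
    diagonal ε * M * diagonal ε ∈ hN.skewMatrices := by
  have norm_sign (k : Fin m) : ‖ε k‖ = 1 := by
    rw [Real.norm_eq_abs, ← sq_eq_sq₀ (abs_nonneg _) zero_le_one, sq_abs, sq, hε, one_pow]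
  have isometric (x : Fin m → ℝ) : hN.mixed ℝ (toLin' (diagonal ε) x) = hN.mixed ℝ x :=
    hN.mixed_congr fun k ↦ by rw [toLin'_apply, mulVec_diagonal, norm_mul, norm_sign, one_mul]
  have involutive (x : Fin m → ℝ) : toLin' (diagonal ε) (toLin' (diagonal ε) x) = x := by
    ext k
    rw [toLin'_apply, toLin'_apply, mulVec_diagonal, mulVec_diagonal, ← mul_assoc, hε, one_mul]
  have := comp_mem_skewOperators hM isometric (fun x ↦ (isometric x).le) involutive
  rwa [LinearEquiv.coe_coe, ← toLin'_mul, ← toLin'_mul, ← Matrix.mul_assoc] at this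

theorem diag_eq_zero_of_mem_skewMatrices (hN : IsLatticeNorm N) (hM : M ∈ hN.skewMatrices) :
    M i i = 0 := by
  let ε : Fin m → ℝ := Function.update 1 i (-1)
  have sum_mem := add_mem hM (diagonal_mul_mul_diagonal_mem_skewMatrices hN hM (ε := ε) fun k ↦ by
    by_cases hk : k = i <;> simp [ε, hk])
  suffices 2 * M i i = 0 by linarith
  refine eq_zero_of_mem_skewOperators_of_apply_eq_smul (x := Pi.single i 1) sum_mem (fun h ↦ ?_) ?_
  · simpa using congrFun (hN.mixed_eq_zero.1 h) i
  · ext k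
    rw [LinearEquiv.coe_coe, toLin'_apply, mulVec_single_one, col_apply, Matrix.add_apply,
      mul_diagonal, diagonal_mul]
    rcases eq_or_ne k i with rfl | hk
    · simp [ε, two_mul]
    · simp [ε, hk]

theorem submatrix_mem_skewMatrices (hN : IsSymmLatticeNorm N) (hM : M ∈ hN.1.skewMatrices)
    (σ : Equiv.Perm (Fin m)) : M.submatrix σ σ ∈ hN.1.skewMatrices := by
  have isometric (τ : Equiv.Perm (Fin m)) (x : Fin m → ℝ) :
      hN.1.mixed ℝ (LinearMap.funLeft ℝ ℝ τ x) = hN.1.mixed ℝ x := by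
    rw [hN.1.mixed_real_apply, hN.1.mixed_real_apply]
    exact hN.2 τ x
  have := comp_mem_skewOperators hM (isometric σ.symm) (fun x ↦ (isometric σ x).le) fun x ↦ by
    ext k; simp only [LinearMap.funLeft_apply, Equiv.symm_apply_apply]
  rwa [LinearEquiv.coe_coe, ← toLin'_submatrix] at this

/- With `D k` the sign change of coordinate `k`, the map `M ↦ M - D k * M * D k` doubles the
entries for which exactly one of the two indices is `k`, and kills all the others. -/
theorem single_add_single_mem_skewMatrices (hN : IsLatticeNorm N) (hM : M ∈ hN.skewMatrices)
    (hij : i ≠ j) : single i j (M i j) + single j i (M j i) ∈ hN.skewMatrices := by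
  let ε (k : Fin m) : Fin m → ℝ := Function.update 1 k (-1)
  have cut_mem (k : Fin m) {A : Matrix (Fin m) (Fin m) ℝ} (hA : A ∈ hN.skewMatrices) :
      A - diagonal (ε k) * A * diagonal (ε k) ∈ hN.skewMatrices := by
    refine sub_mem hA (diagonal_mul_mul_diagonal_mem_skewMatrices hN hA fun l ↦ ?_)
    by_cases hl : l = k <;> simp [ε, hl]
  have cut_apply (k : Fin m) (A : Matrix (Fin m) (Fin m) ℝ) (a b : Fin m) :
      (A - diagonal (ε k) * A * diagonal (ε k)) a b = (1 - ε k a * ε k b) * A a b := by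
    rw [Matrix.sub_apply, mul_diagonal, diagonal_mul]; ring
  convert! hN.skewMatrices.smul_mem (1 / 4) (cut_mem j (cut_mem i hM)) using 1
  ext a b
  rw [Matrix.smul_apply, cut_apply, cut_apply, Matrix.add_apply, single_apply, single_apply,
    smul_eq_mul]
  simp only [ε, Function.update_apply, Pi.one_apply]
  by_cases hai : i = a <;> by_cases haj : j = a <;> by_cases hbi : i = b <;>
    by_cases hbj : j = b <;> subst_vars <;> simp_all [eq_comm] <;> ring

/-- The infinitesimal rotation taking coordinate `i` to coordinate `j`. -/
def rotationGenerator (i j : Fin m) : Matrix (Fin m) (Fin m) ℝ := single j i 1 - single i j 1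

theorem rotationGenerator_mulVec (x : Fin m → ℝ) :
    rotationGenerator i j *ᵥ x = Pi.single j (x i) - Pi.single i (x j) := by
  rw [rotationGenerator, sub_mulVec, single_mulVec, single_mulVec, one_mul, one_mul]
  rfl

theorem apply_rotate_eq_of_rotationGenerator_mem (hN : IsLatticeNorm N)
    (hR : rotationGenerator i j ∈ hN.skewMatrices) (hij : i ≠ j) (x : Fin m → ℝ) :
    N (Function.update (Function.update x i √(x i ^ 2 + x j ^ 2)) j 0) = N x := by
  let z : ℂ := ⟨x i, x j⟩
  let w : Fin m → ℝ := Function.update (Function.update x i 0) j 0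
  have norm_z : ‖z‖ = √(x i ^ 2 + x j ^ 2) := by
    rw [Complex.norm_def, Complex.normSq_apply, sq, sq]
  have generator_u : toLin' (rotationGenerator i j) (Pi.single i ‖z‖) = Pi.single j ‖z‖ := by
    rw [toLin'_apply, rotationGenerator_mulVec]; simp [hij.symm]
  have generator_v : toLin' (rotationGenerator i j) (Pi.single j ‖z‖) = -Pi.single i ‖z‖ := by
    rw [toLin'_apply, rotationGenerator_mulVec]; simp [hij]
  have generator_w : toLin' (rotationGenerator i j) w = 0 := by
    rw [toLin'_apply, rotationGenerator_mulVec]; simp [w, hij]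
  have hcont : Continuous (hN.mixed ℝ) :=
    continuousOn_univ.1 ((hN.mixed ℝ).convexOn.continuousOn isOpen_univ)
  have rotated := seminorm_rotation_eq hcont hR generator_u generator_v generator_w z.arg
  have polar : w + (Real.cos z.arg • Pi.single i ‖z‖ + Real.sin z.arg • Pi.single j ‖z‖) = x := by
    ext k
    have hcos : Real.cos z.arg * ‖z‖ = x i := by rw [mul_comm, Complex.norm_mul_cos_arg]
    have hsin : Real.sin z.arg * ‖z‖ = x j := by rw [mul_comm, Complex.norm_mul_sin_arg]
    simp only [Pi.add_apply, Pi.smul_apply, Pi.single_apply, Function.update_apply, smul_eq_mul, w]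
    grind
  have unrotated : w + Pi.single i ‖z‖
      = Function.update (Function.update x i √(x i ^ 2 + x j ^ 2)) j 0 := by
    ext k
    simp only [Pi.add_apply, Pi.single_apply, Function.update_apply, norm_z, w]
    grind
  rwa [polar, unrotated, hN.mixed_real_apply, hN.mixed_real_apply, eq_comm] at rotated

/-- `N` is a positive multiple of the Euclidean norm; a symmetric lattice norm of any
other kind has no skew matrices except zero. -/
def IsEuclideanMultiple (N : (Fin m → ℝ) → ℝ) : Prop :=
  ∃ c : ℝ, 0 < c ∧ ∀ x : Fin m → ℝ, N x = c * Real.sqrt (∑ i, x i ^ 2)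

theorem apply_collapse_eq_of_forall_rotate (hN : IsLatticeNorm N)
    (hrot : ∀ q ≠ i, ∀ x : Fin m → ℝ,
      N (Function.update (Function.update x i √(x i ^ 2 + x q ^ 2)) q 0) = N x)
    (x : Fin m → ℝ) (s : Finset (Fin m)) (hi : i ∉ s) :
    N (Function.update (s.piecewise 0 x) i √(x i ^ 2 + ∑ k ∈ s, x k ^ 2)) = N x := by
  induction s using Finset.induction_on with
  | empty =>
    rw [Finset.piecewise_empty, Finset.sum_empty, add_zero, Real.sqrt_sq_eq_abs, hN.2.1,
      hN.2.1 x]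
    congr 1
    ext k
    by_cases hk : k = i <;> simp [hk]
  | insert q s hq ih =>
    obtain ⟨hiq, his⟩ := not_or.1 (mt Finset.mem_insert.2 hi)
    rw [← ih his, ← hrot q (Ne.symm hiq)
      (Function.update (s.piecewise 0 x) i √(x i ^ 2 + ∑ k ∈ s, x k ^ 2))]
    congr 1
    have sum_nonneg : 0 ≤ x i ^ 2 + ∑ k ∈ s, x k ^ 2 := by positivity
    rw [Function.update_self, Function.update_of_ne (Ne.symm hiq), Real.sq_sqrt sum_nonneg,
      s.piecewise_eq_of_notMem _ _ hq, Function.update_idem, Finset.piecewise_insert,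
      Function.update_comm hiq, Finset.sum_insert hq, Pi.zero_apply]
    congr 2
    ring

theorem isEuclideanMultiple_of_rotationGenerator_mem (hN : IsSymmLatticeNorm N)
    (hR : rotationGenerator i j ∈ hN.1.skewMatrices) (hij : i ≠ j) : IsEuclideanMultiple N := by
  have generator_mem (q : Fin m) (hq : q ≠ i) : rotationGenerator i q ∈ hN.1.skewMatrices := by
    have := submatrix_mem_skewMatrices hN hR (Equiv.swap j q)
    rwa [rotationGenerator, submatrix_sub, Pi.sub_apply, Pi.sub_apply, submatrix_single_equiv,
      submatrix_single_equiv, Equiv.symm_swap, Equiv.swap_apply_left,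
      Equiv.swap_apply_of_ne_of_ne hij hq.symm] at this
  have collapse (x : Fin m → ℝ) := apply_collapse_eq_of_forall_rotate hN.1
    (fun q hq ↦ apply_rotate_eq_of_rotationGenerator_mem hN.1 (generator_mem q hq) hq.symm)
    x (Finset.univ.erase i) (Finset.notMem_erase i _)
  have single_pos : 0 < N (Pi.single i 1) := by
    rw [← hN.1.mixed_real_apply]
    refine (apply_nonneg _ _).lt_of_ne' fun h ↦ ?_
    exact one_ne_zero (Pi.single_eq_zero_iff.1 (hN.1.mixed_eq_zero.1 h))
  refine ⟨N (Pi.single i 1), single_pos, fun x ↦ ?_⟩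
  rw [← collapse x, Finset.add_sum_erase _ (fun k ↦ x k ^ 2) (Finset.mem_univ i), mul_comm,
    ← abs_of_nonneg (Real.sqrt_nonneg _), ← hN.1.1.2.1]
  congr 1
  ext k
  by_cases hk : k = i <;> simp [hk]

theorem offDiag_eq_zero_of_mem_skewMatrices (hN : IsSymmLatticeNorm N)
    (hNE : ¬ IsEuclideanMultiple N) (hM : M ∈ hN.1.skewMatrices) (hij : i ≠ j) : M i j = 0 := by
  have block_mem := single_add_single_mem_skewMatrices hN.1 hM hij
  have symmetric : M j i = M i j := by
    by_contra hne
    refine hNE (isEuclideanMultiple_of_rotationGenerator_mem (i := i) (j := j) hN ?_ hij)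
    have diff_mem := sub_mem block_mem (submatrix_mem_skewMatrices hN block_mem (Equiv.swap i j))
    convert! hN.1.skewMatrices.smul_mem (M j i - M i j)⁻¹ diff_mem using 1
    have hne' : M j i - M i j ≠ 0 := sub_ne_zero.2 hne
    ext k l
    simp only [rotationGenerator, Matrix.sub_apply, single_apply, Matrix.smul_apply,
      Matrix.add_apply, submatrix_apply, smul_eq_mul]
    grind
  rw [symmetric] at block_mem
  refine eq_zero_of_mem_skewOperators_of_apply_eq_smul (x := Pi.single i 1 + Pi.single j 1)
    block_mem (fun h ↦ ?_) ?_
  · simpa [hij] using congrFun (hN.1.mixed_eq_zero.1 h) i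
  · ext k
    simp only [LinearEquiv.coe_coe, map_add, LinearMap.add_apply, toLin'_apply, single_mulVec,
      Pi.add_apply, ne_eq, hij.symm, not_false_eq_true, Pi.single_eq_of_ne, Pi.single_eq_same,
      mul_one, hij, Function.update_apply, Pi.zero_apply, Pi.smul_apply, Pi.single_apply,
      smul_eq_mul]
    grind

end SkewMatrix

section Wedge

variable {H : Type*} [NormedAddCommGroup H] [InnerProductSpace ℝ H]

theorem mem_skewOperators_normSeminorm {a : H →L[ℝ] H} (ha : ∀ v, ⟪v, a v⟫ = 0) :
    (a : Module.End ℝ H) ∈ skewOperators (normSeminorm ℝ H) := by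
  refine ⟨‖a‖ ^ 2, fun v t ↦ ?_⟩
  change ‖v + t • a v‖ ≤ (1 + ‖a‖ ^ 2 * t ^ 2) * ‖v‖
  refine le_of_sq_le_sq ?_ (by positivity)
  have pythagoras : ‖v + t • a v‖ ^ 2 = ‖v‖ ^ 2 + t ^ 2 * ‖a v‖ ^ 2 := by
    rw [norm_add_sq_real, inner_smul_right, ha, norm_smul, mul_pow, Real.norm_eq_abs, sq_abs]
    ring
  calc ‖v + t • a v‖ ^ 2 ≤ ‖v‖ ^ 2 + t ^ 2 * (‖a‖ * ‖v‖) ^ 2 := by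
        rw [pythagoras]; gcongr; exact a.le_opNorm v
    _ = (1 + ‖a‖ ^ 2 * t ^ 2) * ‖v‖ ^ 2 := by ring
    _ ≤ (1 + ‖a‖ ^ 2 * t ^ 2) ^ 2 * ‖v‖ ^ 2 := by
        gcongr; exact le_self_pow₀ (le_add_of_nonneg_right (by positivity)) two_ne_zero
    _ = ((1 + ‖a‖ ^ 2 * t ^ 2) * ‖v‖) ^ 2 := (mul_pow ..).symm

/-- The skew-adjoint operator `v ↦ ⟪h, v⟫ k - ⟪k, v⟫ h` of rank at most two. -/
noncomputable def wedge (h k : H) : H →L[ℝ] H :=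
  InnerProductSpace.rankOne ℝ k h - InnerProductSpace.rankOne ℝ h k

theorem wedge_apply (h k v : H) : wedge h k v = ⟪h, v⟫ • k - ⟪k, v⟫ • h := rfl

theorem inner_wedge_self (h k v : H) : ⟪v, wedge h k v⟫ = 0 := by
  rw [wedge_apply, inner_sub_right, inner_smul_right, inner_smul_right, real_inner_comm v h,
    real_inner_comm v k]
  ring

theorem exists_ne_zero_inner_eq_zero (hH : 1 < Module.rank ℝ H) (w : H) :
    ∃ h ≠ 0, ⟪w, h⟫ = 0 := by
  by_contra! hw
  have hker : LinearMap.ker (innerₛₗ ℝ w) = ⊥ := by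
    refine LinearMap.ker_eq_bot'.2 fun h hh ↦ ?_
    by_contra hne
    exact hw h hne hh
  have := LinearMap.lift_rank_le_of_injective (innerₛₗ ℝ w) (LinearMap.ker_eq_bot.1 hker)
  rw [Module.rank_self, Cardinal.lift_one, Cardinal.lift_le_one_iff] at this
  exact hH.not_ge this

end Wedge

section VectorSkew

variable {m : ℕ} {N : (Fin m → ℝ) → ℝ}
  {K : Type*} [NormedAddCommGroup K] [InnerProductSpace ℝ K] {B : Module.End ℝ (Fin m → K)}

theorem inner_apply_single_eq_zero_of_forall_skewMatrices (hN : IsLatticeNorm N)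
    (hB : B ∈ skewOperators (hN.mixed K)) {p q : Fin m} (hpq : ∀ M ∈ hN.skewMatrices, M p q = 0)
    {v : Fin m → K} (hv : ∀ k, v k ≠ 0) : ⟪v p, B (Pi.single q (v q)) p⟫ = 0 := by
  let u (k : Fin m) : K := ‖v k‖⁻¹ • v k
  have norm_u (k : Fin m) : ‖u k‖ = 1 := norm_smul_inv_norm (𝕜 := ℝ) (hv k)
  let embed : (Fin m → ℝ) →ₗ[ℝ] (Fin m → K) :=
    LinearMap.pi fun k ↦ (LinearMap.proj k).smulRight (u k)
  let project : (Fin m → K) →ₗ[ℝ] (Fin m → ℝ) :=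
    LinearMap.pi fun k ↦ innerₛₗ ℝ (u k) ∘ₗ LinearMap.proj k
  have compress_mem : project ∘ₗ B ∘ₗ embed ∈ skewOperators (hN.mixed ℝ) := by
    refine comp_mem_skewOperators hB (fun x ↦ hN.mixed_congr fun k ↦ ?_)
      (fun f ↦ hN.mixed_mono fun k ↦ ?_) fun x ↦ funext fun k ↦ ?_
    · change ‖x k • u k‖ = ‖x k‖
      rw [norm_smul, norm_u, mul_one]
    · change ‖⟪u k, f k⟫‖ ≤ ‖f k‖
      simpa only [norm_u, one_mul] using norm_inner_le_norm (𝕜 := ℝ) (u k) (f k)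
    · change ⟪u k, x k • u k⟫ = x k
      rw [inner_smul_right, real_inner_self_eq_norm_sq, norm_u, one_pow, mul_one]
  have entry : LinearMap.toMatrix' (project ∘ₗ B ∘ₗ embed) p q = 0 := by
    refine hpq _ ?_
    rw [IsLatticeNorm.skewMatrices, Submodule.mem_comap, LinearEquiv.coe_coe,
      Matrix.toLin'_toMatrix']
    exact compress_mem
  have embed_single : embed (Pi.single q 1) = ‖v q‖⁻¹ • Pi.single q (v q) := by
    ext k
    change (Pi.single q 1 : Fin m → ℝ) k • u k = ‖v q‖⁻¹ • (Pi.single q (v q) : Fin m → K) k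
    rcases eq_or_ne k q with rfl | hk
    · rw [Pi.single_eq_same, Pi.single_eq_same, one_smul]
    · rw [Pi.single_eq_of_ne hk, Pi.single_eq_of_ne hk, zero_smul, smul_zero]
  rw [LinearMap.toMatrix'_apply, LinearMap.comp_apply, LinearMap.comp_apply, embed_single,
    map_smul, map_smul] at entry
  change ‖v q‖⁻¹ * ⟪‖v p‖⁻¹ • v p, B (Pi.single q (v q)) p⟫ = 0 at entry
  rw [real_inner_smul_left, ← mul_assoc] at entry
  exact (mul_eq_zero.1 entry).resolve_left (by simp [hv])

theorem inner_apply_single_self_eq_zero_of_mem_skewOperators (hN : IsLatticeNorm N)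
    (hB : B ∈ skewOperators (hN.mixed K)) (p : Fin m) (g : K) : ⟪g, B (Pi.single p g) p⟫ = 0 := by
  rcases eq_or_ne g 0 with rfl | hg
  · exact inner_zero_left _
  · exact inner_apply_single_eq_zero_of_forall_skewMatrices hN hB
      (fun _ hM ↦ diag_eq_zero_of_mem_skewMatrices hN hM) (v := fun _ ↦ g) fun _ ↦ hg

theorem apply_single_eq_zero_of_mem_skewOperators (hN : IsSymmLatticeNorm N)
    (hNE : ¬ IsEuclideanMultiple N) (hB : B ∈ skewOperators (hN.1.mixed K)) {p q : Fin m}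
    (hpq : p ≠ q) (g : K) : B (Pi.single q g) p = 0 := by
  by_contra hw
  have hg : g ≠ 0 := by
    rintro rfl
    exact hw (by rw [Pi.single_zero, map_zero, Pi.zero_apply])
  have := inner_apply_single_eq_zero_of_forall_skewMatrices hN.1 hB
    (fun _ hM ↦ offDiag_eq_zero_of_mem_skewMatrices hN hNE hM hpq)
    (v := fun k ↦ if k = q then g else B (Pi.single q g) p) fun k ↦ by split_ifs <;> assumption
  rw [if_neg hpq, if_pos rfl, inner_self_eq_zero] at this
  exact hw this

end VectorSkew

section Blocks

theorem eq_zero_of_forall_mul_eq_zero {R E : Type*} [CommSemiring R] [NoZeroDivisors R]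
    [AddCommMonoid E] [Module R E] {φ ψ : E →ₗ[R] R} (h : ∀ x, φ x * ψ x = 0) {y : E}
    (hy : ψ y ≠ 0) : φ = 0 := by
  have hφy : φ y = 0 := (mul_eq_zero.1 (h y)).resolve_right hy
  ext x
  have hsum := h (x + y)
  rw [map_add, map_add, hφy, add_zero, mul_add, h x, zero_add] at hsum
  exact (mul_eq_zero.1 hsum).resolve_right hy

section Entries

variable {R ι κ H K : Type*} [Semiring R] [DecidableEq ι] [AddCommMonoid H] [Module R H]
  [AddCommMonoid K] [Module R K]

/-- The entry in row `p` and column `i` of a linear map between vector-valued sequence spaces,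
viewed as a matrix of linear maps. -/
def block (T : (ι → H) →ₗ[R] (κ → K)) (p : κ) (i : ι) : H →ₗ[R] K :=
  LinearMap.proj p ∘ₗ T ∘ₗ LinearMap.single R (fun _ ↦ H) i

variable {T : (ι → H) →ₗ[R] (κ → K)} {x : ι → H} {p : κ}

theorem apply_eq_sum_block [Fintype ι] : T x p = ∑ i, block T p i (x i) := by
  conv_lhs => rw [← LinearMap.sum_single_apply (fun _ ↦ H) x, map_sum, Finset.sum_apply]
  rfl

theorem exists_block_apply_ne_zero [Finite ι] (h : T x p ≠ 0) : ∃ i, block T p i (x i) ≠ 0 := by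
  cases nonempty_fintype ι
  rw [apply_eq_sum_block] at h
  obtain ⟨i, -, hi⟩ := Finset.exists_ne_zero_of_sum_ne_zero h
  exact ⟨i, hi⟩

end Entries

variable {H K : Type*} [NormedAddCommGroup H] [InnerProductSpace ℝ H]
  [NormedAddCommGroup K] [InnerProductSpace ℝ K]
  {m : ℕ} {M N : (Fin m → ℝ) → ℝ} {T : (Fin m → H) ≃ₗ[ℝ] (Fin m → K)} {p q i : Fin m}

theorem conj_wedge_mem_skewOperators (hM : IsLatticeNorm M) (hN : IsLatticeNorm N)
    (hT : ∀ f, hN.mixed K (T f) = hM.mixed H f) (i : Fin m) (h k : H) :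
    T.toLinearMap ∘ₗ (LinearMap.single ℝ (fun _ ↦ H) i ∘ₗ (wedge h k : Module.End ℝ H) ∘ₗ
      LinearMap.proj i) ∘ₗ T.symm.toLinearMap ∈ skewOperators (hN.mixed K) :=
  comp_mem_skewOperators
    (single_comp_proj_mem_skewOperators hM
      (mem_skewOperators_normSeminorm (inner_wedge_self h k)) i)
    (fun x ↦ by rw [← hT]; simp) (fun x ↦ (hT x).le) fun x ↦ by simp

theorem block_wedge_block_symm_eq_zero (hM : IsLatticeNorm M) (hN : IsSymmLatticeNorm N)
    (hNE : ¬ IsEuclideanMultiple N) (hT : ∀ f, hN.1.mixed K (T f) = hM.mixed H f) (hpq : p ≠ q)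
    (h k : H) (g : K) : block T.toLinearMap p i (wedge h k (block T.symm.toLinearMap i q g)) = 0 :=
  apply_single_eq_zero_of_mem_skewOperators hN hNE
    (conj_wedge_mem_skewOperators hM hN.1 hT i h k) hpq g

theorem inner_block_wedge_block_symm_eq_zero (hM : IsLatticeNorm M) (hN : IsLatticeNorm N)
    (hT : ∀ f, hN.mixed K (T f) = hM.mixed H f) (h k : H) (g : K) :
    ⟪g, block T.toLinearMap p i (wedge h k (block T.symm.toLinearMap i p g))⟫ = 0 :=
  inner_apply_single_self_eq_zero_of_mem_skewOperators hN
    (conj_wedge_mem_skewOperators hM hN hT i h k) p g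

theorem block_eq_zero_of_inner_eq_zero (hM : IsLatticeNorm M) (hN : IsSymmLatticeNorm N)
    (hNE : ¬ IsEuclideanMultiple N) (hT : ∀ f, hN.1.mixed K (T f) = hM.mixed H f) (hpq : p ≠ q)
    {g : K} (hw : block T.symm.toLinearMap i q g ≠ 0) {h : H}
    (hh : ⟪block T.symm.toLinearMap i q g, h⟫ = 0) : block T.toLinearMap p i h = 0 := by
  set w := block T.symm.toLinearMap i q g
  have hwedge := block_wedge_block_symm_eq_zero (i := i) hM hN hNE hT hpq h w g
  rw [wedge_apply, real_inner_comm, hh, zero_smul, zero_sub, map_neg, map_smul, neg_eq_zero,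
    smul_eq_zero] at hwedge
  exact hwedge.resolve_left (inner_self_ne_zero.2 hw)

theorem inner_symm_apply_eq_zero (hM : IsLatticeNorm M) (hN : IsSymmLatticeNorm N)
    (hNE : ¬ IsEuclideanMultiple N) (hT : ∀ f, hN.1.mixed K (T f) = hM.mixed H f) {h w : H}
    (hh : block T.toLinearMap p i h = 0) (hw : block T.toLinearMap p i w ≠ 0) (x : Fin m → K) :
    ⟪h, T.symm x i⟫ = 0 := by
  have block_wedge (v : H) :
      block T.toLinearMap p i (wedge h w v) = ⟪h, v⟫ • block T.toLinearMap p i w := by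
    rw [wedge_apply, map_sub, map_smul, map_smul, hh, smul_zero, sub_zero]
  rw [← LinearEquiv.coe_coe, apply_eq_sum_block, inner_sum]
  refine Finset.sum_eq_zero fun r _ ↦ ?_
  rcases eq_or_ne p r with rfl | hpr
  · have hprod (g : K) : (innerₛₗ ℝ h ∘ₗ block T.symm.toLinearMap i p) g *
        innerₛₗ ℝ (block T.toLinearMap p i w) g = 0 := by
      have := inner_block_wedge_block_symm_eq_zero (p := p) (i := i) hM hN.1 hT h w g
      rw [block_wedge, inner_smul_right, real_inner_comm _ g] at this
      exact this
    exact congr($(eq_zero_of_forall_mul_eq_zero hprod (inner_self_ne_zero.2 hw)) (x p))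
  · have := block_wedge_block_symm_eq_zero (i := i) hM hN hNE hT hpr h w (x r)
    rw [block_wedge, smul_eq_zero] at this
    exact this.resolve_right hw

theorem block_symm_eq_zero_of_block_ne_zero (hM : IsLatticeNorm M) (hN : IsSymmLatticeNorm N)
    (hNE : ¬ IsEuclideanMultiple N) (hT : ∀ f, hN.1.mixed K (T f) = hM.mixed H f)
    (hH : 1 < Module.rank ℝ H) (hp : block T.toLinearMap p i ≠ 0) (hpq : p ≠ q) :
    block T.symm.toLinearMap i q = 0 := by
  by_contra hq
  obtain ⟨g, hg⟩ := DFunLike.ne_iff.1 hq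
  set w := block T.symm.toLinearMap i q g
  have orthogonal (h : H) (hh : ⟪w, h⟫ = 0) : block T.toLinearMap p i h = 0 :=
    block_eq_zero_of_inner_eq_zero hM hN hNE hT hpq hg hh
  have hw : block T.toLinearMap p i w ≠ 0 := by
    intro hw
    refine hp (LinearMap.ext fun v ↦ ?_)
    have hperp : ⟪w, ⟪w, w⟫ • v - ⟪w, v⟫ • w⟫ = 0 := by
      rw [inner_sub_right, inner_smul_right, inner_smul_right]; ring
    have := orthogonal _ hperp
    rw [map_sub, map_smul, map_smul, hw, smul_zero, sub_zero, smul_eq_zero] at this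
    exact this.resolve_left (inner_self_ne_zero.2 hg)
  obtain ⟨h, h_ne, hh⟩ := exists_ne_zero_inner_eq_zero hH w
  have := inner_symm_apply_eq_zero hM hN hNE hT (orthogonal h hh) hw (T (Pi.single i h))
  rw [T.symm_apply_apply, Pi.single_eq_same, inner_self_eq_zero] at this
  exact h_ne this

theorem eq_of_block_ne_zero (hM : IsLatticeNorm M) (hN : IsSymmLatticeNorm N)
    (hNE : ¬ IsEuclideanMultiple N) (hT : ∀ f, hN.1.mixed K (T f) = hM.mixed H f)
    (hH : 1 < Module.rank ℝ H) (hp : block T.toLinearMap p i ≠ 0)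
    (hq : block T.toLinearMap q i ≠ 0) : p = q := by
  by_contra hpq
  obtain ⟨h, hh⟩ := DFunLike.ne_iff.1 hp
  have h_ne : T.symm.toLinearMap (T (Pi.single i h)) i ≠ 0 := by
    rw [LinearEquiv.coe_coe, T.symm_apply_apply, Pi.single_eq_same]
    rintro rfl
    exact hh (map_zero _)
  obtain ⟨r, hr⟩ := exists_block_apply_ne_zero h_ne
  refine hr ?_
  rcases eq_or_ne p r with rfl | hpr
  · rw [block_symm_eq_zero_of_block_ne_zero hM hN hNE hT hH hq (Ne.symm hpq), LinearMap.zero_apply]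
  · rw [block_symm_eq_zero_of_block_ne_zero hM hN hNE hT hH hp hpr, LinearMap.zero_apply]

theorem exists_perm_of_block_ne_zero (hM : IsLatticeNorm M) (hN : IsSymmLatticeNorm N)
    (hNE : ¬ IsEuclideanMultiple N) (hT : ∀ f, hN.1.mixed K (T f) = hM.mixed H f)
    (hH : 1 < Module.rank ℝ H) :
    ∃ σ : Equiv.Perm (Fin m), ∀ p i, block T.toLinearMap p i ≠ 0 → p = σ i := by
  have : Nontrivial H := rank_pos_iff_nontrivial.1 (zero_lt_one.trans hH)
  obtain ⟨h, h_ne⟩ := exists_ne (0 : H)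
  have column_ne_zero (i : Fin m) : ∃ p, block T.toLinearMap p i h ≠ 0 := by
    by_contra! hzero
    have : T (Pi.single i h) = 0 := funext hzero
    rw [T.map_eq_zero_iff, Pi.single_eq_zero_iff] at this
    exact h_ne this
  choose σ hσ using column_ne_zero
  have eq_σ (p i : Fin m) (hp : block T.toLinearMap p i ≠ 0) : p = σ i :=
    eq_of_block_ne_zero hM hN hNE hT hH hp fun hzero ↦ hσ i congr($hzero h)
  have surjective : Function.Surjective σ := by
    intro p
    let g : K := block T.toLinearMap (σ p) p h
    have hg : T.toLinearMap (T.symm (Pi.single p g)) p ≠ 0 := by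
      rw [LinearEquiv.coe_coe, T.apply_symm_apply, Pi.single_eq_same]
      exact hσ p
    obtain ⟨i, hi⟩ := exists_block_apply_ne_zero hg
    exact ⟨i, (eq_σ p i fun hzero ↦ hi congr($hzero _)).symm⟩
  exact ⟨Equiv.ofBijective σ ⟨Finite.injective_iff_surjective.2 surjective, surjective⟩, eq_σ⟩

end Blocks

theorem surjective_isometry_preserves_vector_disjointness_of_infinite_dim_general
    {m : ℕ} {M N : (Fin m → ℝ) → ℝ} (hM : IsLatticeNorm M) (hN : IsSymmLatticeNorm N)
    (hNE : ¬ IsEuclideanMultiple N)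
    {H K : Type*} [NormedAddCommGroup H] [InnerProductSpace ℝ H]
    [NormedAddCommGroup K] [InnerProductSpace ℝ K] (hH : 1 < Module.rank ℝ H)
    (T : (Fin m → H) →ₗ[ℝ] (Fin m → K)) (hTsurj : Function.Surjective T)
    (hTiso : ∀ f : Fin m → H, N (fun i ↦ ‖T f i‖) = M fun i ↦ ‖f i‖)
    (f g : Fin m → H) (hfg : ∀ i, ‖f i‖ * ‖g i‖ = 0) (p : Fin m) : ‖T f p‖ * ‖T g p‖ = 0 := by
  have hTinj : Function.Injective T := by
    refine (injective_iff_map_eq_zero T).2 fun x hx ↦ hM.mixed_eq_zero.1 ?_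
    rw [hM.mixed_apply, ← hTiso, ← hN.1.mixed_apply, hx, map_zero]
  obtain ⟨σ, hσ⟩ := exists_perm_of_block_ne_zero (T := .ofBijective T ⟨hTinj, hTsurj⟩)
    hM hN hNE hTiso hH
  have exists_preimage (x : Fin m → H) (hx : T x p ≠ 0) : x (σ.symm p) ≠ 0 := by
    obtain ⟨i, hi⟩ := exists_block_apply_ne_zero hx
    rw [hσ p i fun hzero ↦ hi congr($hzero _), σ.symm_apply_apply]
    exact fun hzero ↦ hi (by rw [hzero, map_zero])
  by_contra hp
  obtain ⟨hf, hg⟩ := mul_ne_zero_iff.1 hp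
  exact mul_ne_zero (norm_ne_zero_iff.2 (exists_preimage f (norm_ne_zero_iff.1 hf)))
    (norm_ne_zero_iff.2 (exists_preimage g (norm_ne_zero_iff.1 hg))) (hfg _)

theorem surjective_isometry_preserves_vector_disjointness_of_infinite_dim
    {m : ℕ} (hm : 2 ≤ m) (N : (Fin m → ℝ) → ℝ)
    (hN : IsSymmLatticeNorm N)
    (hN2 : ¬ ∃ c : ℝ, 0 < c ∧ ∀ x : Fin m → ℝ, N x = c * Real.sqrt (∑ i, x i ^ 2))
    {H : Type*} [NormedAddCommGroup H] [InnerProductSpace ℝ H] [CompleteSpace H]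
    [TopologicalSpace.SeparableSpace H] (hinf : ¬ FiniteDimensional ℝ H)
    (T : (Fin m → H) →ₗ[ℝ] (Fin m → H))
    (hTsurj : Function.Surjective T)
    (hTiso : ∀ f : Fin m → H, N (fun i => ‖T f i‖) = N fun i => ‖f i‖)
    (f g : Fin m → H) (hfg : ∀ i, ‖f i‖ * ‖g i‖ = 0) :
    ∀ i, ‖T f i‖ * ‖T g i‖ = 0 :=
  have hH : 1 < Module.rank ℝ H :=
    Cardinal.one_lt_aleph0.trans_le (not_lt.1 (mt Module.rank_lt_aleph0_iff.1 hinf))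
  surjective_isometry_preserves_vector_disjointness_of_infinite_dim_general
    hN.1 hN hN2 hH T hTsurj hTiso f g hfg
end
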